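/- arXiv:1604.02814 — 4 statements merged into one kernel-verified Lean document; each statement's English description precedes it below -/
import Mathlib

section
/- Let d ≥ 1 be an integer, let r = p^e be a power of a prime p with integer e ≥ 0, and set N = (r−1)(2d+2). Let the vertex set of Δ_N be partitioned into d+1 color classes, each of cardinality at most 2r−1. Then for every continuous map f: Δ_N → ℝ^d there exist r pairwise disjoint rainbow faces σ_1, …, σ_r of Δ_N such that f(σ_1) ∩ ⋯ ∩ f(σ_r) ≠ ∅. (The topological weak colored Tverberg theorem; the case m = 0 of the topological transversal weak colored Tverberg theorem.) -/
/-!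
The theorem follows from the topological Tverberg theorem for prime powers by the method of
constraint functions.  Add to `f` one coordinate for every color class `C i`, namely
`∑ x u * x v` over ordered pairs of distinct `u, v ∈ C i`; it vanishes at a point of the simplex
exactly when the support of the point has at most one vertex in `C i`.  The enlarged map has
`2 d + 1` coordinates, so Tverberg's theorem provides `r` points with disjoint supports on which
all coordinates agree.  As `C i` has fewer than `2 r` vertices, one of the supports meets it at most
once, hence the constraint coordinate vanishes at one, and so at all, of the points: every support
is a rainbow face.

The topological Tverberg theorem (`topological_tverberg`) is derived from a Borsuk–Ulam theorem
for `G = (ℤ/p)^e` (`exists_zero_of_equivariant`): a continuous equivariant map from a join of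
copies of `G` to a sum of `m` nontrivial complex characters has a zero, provided that the join has
dimension at least `2 m`.  To meet complex characters, two configurations of points are treated at
once, as real and imaginary parts; the nontrivial Fourier coefficients of the resulting `G`-indexed
family define the equivariant map, and at a zero the family is constant.

The Borsuk–Ulam theorem is proved with ordered simplicial chains.  If the map had no zero, every
component would have an angle `s` (measured in turns, and extended equivariantly over the zero set
of the component), with an integral winding cocycle `om s` in degree two.  On a simplex so
small that the map is nearly constant on it, some component stays away from zero, so its winding
cocycle, and with it the cup product `Om` of all of them, vanishes (`Om_eq_zero`).  On the other
hand, `IsSys` describes an equivariant chain map from the tensor product of `e` standard periodic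
resolutions of `ℤ/p`; on such a system every winding cocycle represents the Bockstein class of its
character (`IsSys.omega_eq`), and modulo `p` the values of the cup product are the coefficients of
a product of nonzero linear forms (`IsSys.Om_coeff`).  As polynomials over `ZMod p` form a domain,
some value is nonzero.  Iterated barycentric subdivision makes the simplices of the system
arbitrarily small (`exists_small_isSys`), which is a contradiction.
-/

open scoped BigOperators

noncomputable section

/-- The standard `N`-dimensional simplex, realized in Euclidean space `ℝ^{N+1}`. -/
def stdSimp (N : ℕ) : Set (EuclideanSpace ℝ (Fin (N + 1))) :=
  {x | (∀ i, 0 ≤ x i) ∧ ∑ i, x i = 1}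

/-- The face of the standard simplex spanned by the vertex set `S`. -/
def simpFace (N : ℕ) (S : Finset (Fin (N + 1))) : Set (EuclideanSpace ℝ (Fin (N + 1))) :=
  {x ∈ stdSimp N | ∀ i, x i ≠ 0 → i ∈ S}

namespace WCT

/-! ### Twisted differentials over the group ring of an elementary abelian group -/

section Twisted

variable {e : ℕ} {M : Type*} [AddCommGroup M]

/-- The Koszul sign of passing the `i`-th differential over the factors `l < i` of a tensor product,
in multidegree `μ`. -/
def sgn (i : Fin e) (μ : Fin e → ℤ) : ℤ :=
  ((∑ l ∈ Finset.univ.filter (· < i), μ l).negOnePow : ℤˣ)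

/-- The differential in degree `n` of the standard periodic resolution of `ℤ/p`, with `t` the action
of the generator: the norm `1 + t + ⋯ + t ^ (p - 1)` for even `n`, and `t - 1` for odd `n`. -/
def dop (p : ℕ) (t : Module.End ℤ M) (n : ℤ) : Module.End ℤ M :=
  if Even n then ∑ j ∈ Finset.range p, t ^ j else t - 1

/-- The differential of a tensor product of `e` periodic resolutions, applied to a family `c` of
elements indexed by multidegrees, where the `i`-th generator acts by `τ i`. -/
def del (p : ℕ) (τ : Fin e → Module.End ℤ M) (c : (Fin e → ℤ) → M) (μ : Fin e → ℤ) : M :=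
  ∑ i, sgn i μ • dop p (τ i) (μ i) (c (μ - Pi.single i 1))

lemma sgn_sub_single (i j : Fin e) (μ : Fin e → ℤ) :
    sgn j (μ - Pi.single i 1) = if i < j then - sgn j μ else sgn j μ := by
  unfold sgn
  have : (∑ l ∈ Finset.univ.filter (· < j), (μ - Pi.single i 1 : Fin e → ℤ) l)
      = (∑ l ∈ Finset.univ.filter (· < j), μ l) - if i < j then 1 else 0 := by
    simp [Finset.sum_sub_distrib, Pi.single_apply]
  rw [this]
  split_ifs with h
  · simp [Int.negOnePow_sub]
  · simp

lemma sgn_sub_two (i j : Fin e) (μ : Fin e → ℤ) :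
    sgn j (μ - Pi.single i 2) = sgn j μ := by
  have : μ - Pi.single i 2 = μ - Pi.single i 1 - Pi.single i 1 := by
    rw [sub_sub, ← Pi.single_add]; rfl
  rw [this, sgn_sub_single, sgn_sub_single]
  split_ifs <;> simp

lemma dop_mul_dop_pred (p : ℕ) (t : Module.End ℤ M) (ht : t ^ p = 1) (n : ℤ) :
    dop p t n * dop p t (n - 1) = 0 := by
  unfold dop
  rcases Int.even_or_odd n with h | h
  · have h' : ¬ Even (n - 1) := by rw [Int.not_even_iff_odd]; exact h.sub_odd odd_one
    rw [if_pos h, if_neg h', geom_sum_mul, ht, sub_self]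
  · have h' : Even (n - 1) := h.sub_odd odd_one
    rw [if_neg (Int.not_even_iff_odd.2 h), if_pos h', mul_geom_sum, ht, sub_self]

lemma dop_commute (p : ℕ) {t : Module.End ℤ M} {u : Module.End ℤ M} (h : Commute t u) (n : ℤ) :
    Commute (dop p t n) u := by
  unfold dop
  split_ifs
  · exact Commute.sum_left _ _ _ fun j _ => h.pow_left j
  · exact h.sub_left (Commute.one_left _)

/-- The twisted differential squares to zero. -/
lemma del_del (p : ℕ) (τ : Fin e → Module.End ℤ M) (hp : ∀ i, τ i ^ p = 1)
    (hc : ∀ i j, Commute (τ i) (τ j)) (c : (Fin e → ℤ) → M) (μ : Fin e → ℤ) :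
    del p τ (del p τ c) μ = 0 := by
  have key : ∀ i j, sgn i μ • dop p (τ i) (μ i)
      (sgn j (μ - Pi.single i 1) • dop p (τ j) ((μ - Pi.single i 1 : Fin e → ℤ) j)
        (c (μ - Pi.single i 1 - Pi.single j 1))) =
      - (sgn j μ • dop p (τ j) (μ j)
      (sgn i (μ - Pi.single j 1) • dop p (τ i) ((μ - Pi.single j 1 : Fin e → ℤ) i)
        (c (μ - Pi.single j 1 - Pi.single i 1)))) := by
    intro i j
    rw [map_smul, map_smul, sub_right_comm μ (Pi.single j 1)]
    by_cases hij : i = j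
    · subst hij
      have := dop_mul_dop_pred p (τ i) (hp i) (μ i)
      simp only [Pi.sub_apply, Pi.single_eq_same]
      rw [← Module.End.mul_apply, this]
      simp
    · have h1 : (μ - Pi.single i 1 : Fin e → ℤ) j = μ j := by simp [Ne.symm hij]
      have h2 : (μ - Pi.single j 1 : Fin e → ℤ) i = μ i := by simp [hij]
      rw [h1, h2, ← Module.End.mul_apply, ← Module.End.mul_apply,
        (dop_commute p ((dop_commute p (hc j i) (μ j)).symm) (μ i)).eq,
        sgn_sub_single, sgn_sub_single, smul_smul, smul_smul, ← neg_smul]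
      congr 1
      rcases lt_or_gt_of_ne hij with h | h
      · rw [if_pos h, if_neg h.not_gt]; ring
      · rw [if_neg h.not_gt, if_pos h]; ring
  have h2 : del p τ (del p τ c) μ = ∑ i, ∑ j, sgn i μ • dop p (τ i) (μ i)
      (sgn j (μ - Pi.single i 1) • dop p (τ j) ((μ - Pi.single i 1 : Fin e → ℤ) j)
        (c (μ - Pi.single i 1 - Pi.single j 1))) := by
    simp [del, map_sum, Finset.smul_sum]
  -- the double sum is antisymmetric; its diagonal vanishes because `(t - 1) (1 + t + ⋯) = 0`
  have hdiag : ∀ i, sgn i μ • dop p (τ i) (μ i)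
      (sgn i (μ - Pi.single i 1) • dop p (τ i) ((μ - Pi.single i 1 : Fin e → ℤ) i)
        (c (μ - Pi.single i 1 - Pi.single i 1))) = 0 := by
    intro i
    have := dop_mul_dop_pred p (τ i) (hp i) (μ i)
    simp only [Pi.sub_apply, Pi.single_eq_same, map_smul]
    rw [← Module.End.mul_apply, this]
    simp
  rw [h2, ← Finset.sum_product']
  refine Finset.sum_involution (fun x _ => (x.2, x.1)) ?_ ?_ ?_ ?_
  · rintro ⟨i, j⟩ _
    simp only
    rw [key i j, neg_add_cancel]
  · rintro ⟨i, j⟩ _ hne heq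
    apply hne
    simp only [Prod.mk.injEq] at heq
    obtain ⟨h, -⟩ := heq
    subst h
    exact hdiag _
  · simp
  · simp

lemma del_sub (p : ℕ) (τ : Fin e → Module.End ℤ M) (c c' : (Fin e → ℤ) → M) :
    del p τ (c - c') = del p τ c - del p τ c' := by
  ext μ; simp [del, smul_sub, Finset.sum_sub_distrib]

lemma del_map {M' : Type*} [AddCommGroup M'] (p : ℕ) (τ : Fin e → Module.End ℤ M)
    (τ' : Fin e → Module.End ℤ M') (φ : M →ₗ[ℤ] M')
    (h : ∀ i x, φ (τ i x) = τ' i (φ x)) (c : (Fin e → ℤ) → M) (μ : Fin e → ℤ) :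
    φ (del p τ c μ) = del p τ' (fun ν => φ (c ν)) μ := by
  have h1 : ∀ i (k : ℕ) x, φ ((τ i ^ k) x) = (τ' i ^ k) (φ x) := by
    intro i k
    induction k with
    | zero => simp
    | succ k ih =>
      intro x
      rw [pow_succ', pow_succ', Module.End.mul_apply, Module.End.mul_apply, h, ih]
  have h2 : ∀ i n x, φ (dop p (τ i) n x) = dop p (τ' i) n (φ x) := by
    intro i n x
    unfold dop
    split_ifs
    · simp [LinearMap.sum_apply, map_sum, h1]
    · simp [h]
  simp [del, map_sum, h2]

lemma apply_dop (p : ℕ) (t : Module.End ℤ M) {R : Type*} [AddCommGroup R] (f : M →ₗ[ℤ] R)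
    (hf : ∀ x, f (t x) = f x) (n : ℤ) (x : M) :
    f (dop p t n x) = if Even n then (p : ℤ) • f x else 0 := by
  have h1 : ∀ k : ℕ, f ((t ^ k) x) = f x := by
    intro k
    induction k with
    | zero => simp
    | succ k ih => rw [pow_succ', Module.End.mul_apply, hf, ih]
  unfold dop
  split_ifs
  · simp [LinearMap.sum_apply, map_sum, h1]
  · simp [hf]

/-- An invariant functional takes values divisible by `p` on the image of the differential:
invariance turns `t - 1` into `0` and the norm into multiplication by `p`. -/
lemma dvd_apply_del (p : ℕ) (τ : Fin e → Module.End ℤ M) (f : M →ₗ[ℤ] ℤ)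
    (hf : ∀ i x, f (τ i x) = f x) (c : (Fin e → ℤ) → M) (μ : Fin e → ℤ) :
    (p : ℤ) ∣ f (del p τ c μ) := by
  unfold del
  rw [map_sum]
  refine Finset.dvd_sum fun i _ => ?_
  rw [map_smul, apply_dop p (τ i) f (hf i)]
  refine Dvd.dvd.mul_left ?_ _
  split_ifs
  · exact Dvd.intro _ rfl
  · exact dvd_zero _

lemma sum_sub_single (μ : Fin e → ℤ) (i : Fin e) (z : ℤ) :
    ∑ l, (μ - Pi.single i z : Fin e → ℤ) l = (∑ l, μ l) - z := by
  simp [Finset.sum_sub_distrib, Pi.single_apply]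

/-- Solving `h = step (del h)` by recursion on the total degree. -/
lemma exists_recursive_family (p : ℕ) (τ : Fin e → Module.End ℤ M)
    (step : (Fin e → ℤ) → M → M) :
    ∃ h : (Fin e → ℤ) → M, (∀ μ, ∑ l, μ l < 0 → h μ = 0) ∧
      ∀ μ, 0 ≤ ∑ l, μ l → h μ = step μ (del p τ h μ) := by
  let H : ℕ → (Fin e → ℤ) → M := fun n => Nat.rec (fun _ => 0)
    (fun _ G μ => step μ (del p τ G μ)) n
  have hH : ∀ n μ, H (n + 1) μ = step μ (del p τ (H n) μ) := fun _ _ => rfl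
  refine ⟨fun μ => H ((∑ l, μ l) + 1).toNat μ, fun μ hμ => ?_, fun μ hμ => ?_⟩
  · have : ((∑ l, μ l) + 1).toNat = 0 := by omega
    simp only [this]; rfl
  · have : ((∑ l, μ l) + 1).toNat = (∑ l, μ l).toNat + 1 := by omega
    simp only [this, hH]
    congr 1
    unfold del
    refine Finset.sum_congr rfl fun i _ => ?_
    beta_reduce
    rw [sum_sub_single, sub_add_cancel]

/-- Comparison of resolutions.  A family `a` that is compatible with the differentials modulo `p` is
null-homotopic modulo `p`, because `κ` contracts the target; hence every invariant cocycle `f` takes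
values divisible by `p` on it. -/
lemma dvd_of_system (p : ℕ) (τ : Fin e → Module.End ℤ M) (hp : ∀ i, τ i ^ p = 1)
    (hc : ∀ i j, Commute (τ i) (τ j)) (bd κ : Module.End ℤ M)
    (hbd : ∀ i x, bd (τ i x) = τ i (bd x)) (hκ : ∀ x, bd (κ x) = x - κ (bd x))
    (f : M →ₗ[ℤ] ℤ) (hf : ∀ i x, f (τ i x) = f x) (hfb : ∀ x, f (bd x) = 0)
    (a : (Fin e → ℤ) → M) (ha0 : ∀ μ, ∑ l, μ l < 0 → a μ = 0)
    (ha : ∀ μ, ∃ q, bd (a μ) = del p τ a μ + (p : ℤ) • q) (μ : Fin e → ℤ) :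
    (p : ℤ) ∣ f (a μ) := by
  obtain ⟨h, h0, h1⟩ := exists_recursive_family p τ fun μ x => κ (a μ - x)
  -- up to multiples of `p`, the family `h` is a null-homotopy of `a`
  have main : ∀ n : ℕ, ∀ μ : Fin e → ℤ, ∑ l, μ l < (n : ℤ) →
      ∃ q, a μ = bd (h μ) + del p τ h μ + (p : ℤ) • q := by
    intro n
    induction n with
    | zero =>
      intro μ hμ
      refine ⟨0, ?_⟩
      have hd : del p τ h μ = 0 := by
        unfold del
        refine Finset.sum_eq_zero fun i _ => ?_
        rw [h0 _ (by rw [sum_sub_single]; push_cast at hμ; omega)]; simp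
      rw [h0 μ (by exact_mod_cast hμ), ha0 μ (by exact_mod_cast hμ), hd]; simp
    | succ n ih =>
      intro μ hμ
      by_cases hneg : ∑ l, μ l < 0
      · exact ih μ (by omega)
      push Not at hneg
      have hq : ∀ i, ∃ q, a (μ - Pi.single i 1) = bd (h (μ - Pi.single i 1)) +
          del p τ h (μ - Pi.single i 1) + (p : ℤ) • q := fun i =>
        ih _ (by rw [sum_sub_single]; push_cast at hμ; omega)
      choose q hq using hq
      obtain ⟨q0, hq0⟩ := ha μ
      have e1 : bd (del p τ h μ) = del p τ (fun ν => bd (h ν)) μ := del_map p τ τ bd hbd h μ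
      have e2 : del p τ a μ = del p τ (fun ν => bd (h ν)) μ + del p τ (del p τ h) μ +
          (p : ℤ) • ∑ i, sgn i μ • dop p (τ i) (μ i) (q i) := by
        unfold del
        rw [Finset.smul_sum, ← Finset.sum_add_distrib, ← Finset.sum_add_distrib]
        refine Finset.sum_congr rfl fun i _ => ?_
        have := hq i
        unfold del at this
        rw [this, map_add, map_add, smul_add, smul_add, map_smul, smul_comm (p : ℤ)]
      rw [del_del p τ hp hc, add_zero] at e2
      refine ⟨κ (∑ i, sgn i μ • dop p (τ i) (μ i) (q i) + q0), ?_⟩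
      have e3 : bd (a μ - del p τ h μ) =
          (p : ℤ) • (∑ i, sgn i μ • dop p (τ i) (μ i) (q i) + q0) := by
        rw [map_sub, hq0, e1, e2, smul_add]; abel
      rw [h1 μ hneg, hκ, e3, map_smul]; abel
  obtain ⟨q, hq⟩ := main ((∑ l, μ l).toNat + 1) μ (by push_cast; omega)
  rw [hq, map_add, map_add, hfb, zero_add, map_smul]
  exact dvd_add (dvd_apply_del p τ f hf h μ) (Dvd.intro _ rfl)

end Twisted

/-! ### Ordered chains -/

section Chains

variable {V W : Type*}

/-- Augmented ordered chains on the full simplex with vertex set `V`.  A list of `n + 1` vertices,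
which may repeat, is an `n`-simplex; the empty list is the simplex of dimension `-1`. -/
abbrev Ch (V : Type*) := List V →₀ ℤ

/-- The empty simplex, as a chain. -/
def nilc : Ch V := Finsupp.single [] 1

/-- The cone with apex `v`. -/
def cone (v : V) : Module.End ℤ (Ch V) := Finsupp.lmapDomain ℤ ℤ (List.cons v)

@[simp] lemma cone_single (v : V) (l : List V) (z : ℤ) :
    cone v (Finsupp.single l z) = Finsupp.single (v :: l) z := by
  simp [cone]

/-- The boundary of a simplex, by recursion: `∂ (v * l) = l - v * ∂ l`. -/
def bdL : List V → Ch V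
  | [] => 0
  | v :: l => Finsupp.single l 1 - cone v (bdL l)

/-- The augmented boundary operator. -/
def bd : Module.End ℤ (Ch V) := Finsupp.linearCombination ℤ bdL

@[simp] lemma bd_nil : bd (Finsupp.single ([] : List V) 1) = 0 := by simp [bd, bdL]

@[simp] lemma bd_nilc : bd (nilc : Ch V) = 0 := by simp [nilc]

lemma bd_single (l : List V) : bd (Finsupp.single l 1) = bdL l := by simp [bd]

/-- Linear maps on chains agree when they agree on simplices. -/
lemma ch_ext {R : Type*} [AddCommGroup R] {f g : Ch V →ₗ[ℤ] R}
    (h : ∀ l, f (Finsupp.single l 1) = g (Finsupp.single l 1)) (x : Ch V) : f x = g x := by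
  have : f = g := Finsupp.lhom_ext' fun l => LinearMap.ext_ring (h l)
  rw [this]

lemma bd_cone (v : V) (x : Ch V) : bd (cone v x) = x - cone v (bd x) := by
  refine ch_ext (f := bd ∘ₗ cone v) (g := LinearMap.id - cone v ∘ₗ bd) (fun l => ?_) x
  simp [bd_single, bdL]

lemma bd_bd (x : Ch V) : bd (bd x) = 0 := by
  refine ch_ext (f := bd ∘ₗ bd) (g := 0) (fun l => ?_) x
  simp only [LinearMap.comp_apply, LinearMap.zero_apply]
  induction l with
  | nil => simp
  | cons v l ih =>
    rw [← cone_single, bd_cone, map_sub, bd_cone, ih]; simp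

/-- The chain map induced by a map of vertices. -/
def push (φ : V → W) : Ch V →ₗ[ℤ] Ch W := Finsupp.lmapDomain ℤ ℤ (List.map φ)

@[simp] lemma push_single (φ : V → W) (l : List V) (z : ℤ) :
    push φ (Finsupp.single l z) = Finsupp.single (l.map φ) z := by
  simp [push]

@[simp] lemma push_nilc (φ : V → W) : push φ nilc = nilc := by simp [nilc]

lemma push_cone (φ : V → W) (v : V) (x : Ch V) :
    push φ (cone v x) = cone (φ v) (push φ x) := by
  refine ch_ext (f := push φ ∘ₗ cone v) (g := cone (φ v) ∘ₗ push φ) (fun l => ?_) x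
  simp

lemma bd_push (φ : V → W) (x : Ch V) : bd (push φ x) = push φ (bd x) := by
  refine ch_ext (f := bd ∘ₗ push φ) (g := push φ ∘ₗ bd) (fun l => ?_) x
  simp only [LinearMap.comp_apply]
  induction l with
  | nil => simp
  | cons v l ih => rw [← cone_single, push_cone, bd_cone, bd_cone, ih, map_sub, push_cone]

lemma push_comp {X : Type*} (φ : V → W) (ψ : W → X) (x : Ch V) :
    push ψ (push φ x) = push (ψ ∘ φ) x := by
  refine ch_ext (f := push ψ ∘ₗ push φ) (g := push (ψ ∘ φ)) (fun l => ?_) x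
  simp

lemma push_id' (x : Ch V) : push id x = x := by
  refine ch_ext (f := push id) (g := LinearMap.id) (fun l => ?_) x
  simp

lemma push_pow (φ : V → V) (n : ℕ) : (push φ : Module.End ℤ (Ch V)) ^ n = push (φ^[n]) := by
  induction n with
  | zero => ext1 l; ext1; simp
  | succ n ih =>
    rw [pow_succ', ih, Function.iterate_succ']
    exact LinearMap.ext fun x => push_comp _ _ x

/-- Chains all of whose simplices lie in `A`. -/
def sup (A : Set (List V)) : Submodule ℤ (Ch V) := Finsupp.supported ℤ ℤ A

lemma single_mem_sup {A : Set (List V)} {l : List V} (h : l ∈ A) (z : ℤ) :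
    Finsupp.single l z ∈ sup A := Finsupp.single_mem_supported ℤ z h

lemma mem_of_sup {R : Type*} [AddCommGroup R] {A : Set (List V)} {S : Submodule ℤ R}
    (f : Ch V →ₗ[ℤ] R) (h : ∀ l ∈ A, f (Finsupp.single l 1) ∈ S) {x : Ch V} (hx : x ∈ sup A) :
    f x ∈ S := by
  have : sup A ≤ S.comap f := by
    rw [sup, Finsupp.supported_eq_span_single, Submodule.span_le]
    rintro _ ⟨l, hl, rfl⟩
    exact h l hl
  exact this hx

lemma sup_mono {A B : Set (List V)} (h : A ⊆ B) : sup A ≤ sup B := Finsupp.supported_mono h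

lemma eq_of_sup {R : Type*} [AddCommGroup R] {A : Set (List V)} {f g : Ch V →ₗ[ℤ] R}
    (h : ∀ l ∈ A, f (Finsupp.single l 1) = g (Finsupp.single l 1)) {x : Ch V} (hx : x ∈ sup A) :
    f x = g x := by
  have := mem_of_sup (S := ⊥) (f - g) (fun l hl => by simp [h l hl]) hx
  simpa [sub_eq_zero] using this

/-- The sum of the coefficients of the zero-dimensional simplices. -/
def aug : Ch V →ₗ[ℤ] ℤ := Finsupp.linearCombination ℤ fun l => if l.length = 1 then 1 else 0

lemma aug_single (l : List V) : aug (Finsupp.single l 1) = if l.length = 1 then 1 else 0 := by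
  simp [aug]

lemma aug_bd (x : Ch V) : aug (bd x) = 0 := by
  refine ch_ext (f := aug ∘ₗ bd) (g := 0) (fun l => ?_) x
  match l with
  | [] => simp
  | [v] => simp [bd_single, bdL, aug_single]
  | [v, w] => simp [bd_single, bdL, aug_single]
  | v :: w :: u :: l =>
    have h : ∀ x : Ch V, aug (cone v (cone w x)) = 0 := fun x =>
      ch_ext (f := aug ∘ₗ cone v ∘ₗ cone w) (g := 0) (fun l => by simp [aug_single]) x
    simp [bd_single, bdL, aug_single, h]

lemma aug_push (φ : V → W) (x : Ch V) : aug (push φ x) = aug x := by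
  refine ch_ext (f := aug ∘ₗ push φ) (g := aug) (fun l => ?_) x
  simp [aug_single]

/-! ### The winding cocycle of an angle function and cap products -/

/-- The defect `round (s₂ - s₀) - round (s₁ - s₀) - round (s₂ - s₁)`. -/
def om (s : V → ℝ) (a b c : V) : ℤ :=
  round (s c - s a) - round (s b - s a) - round (s c - s b)

/-- The cap product of a simplex with the winding cocycle. -/
def capL (s : V → ℝ) : List V → Ch V
  | a :: b :: c :: l => om s a b c • Finsupp.single (c :: l) 1
  | _ => 0

/-- The cap product with the winding cocycle, evaluated on the front face of dimension two. -/
def cap (s : V → ℝ) : Module.End ℤ (Ch V) := Finsupp.linearCombination ℤ (capL s)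

lemma cap_single (s : V → ℝ) (l : List V) : cap s (Finsupp.single l 1) = capL s l := by
  simp [cap]

/-- The value of the winding cocycle on a simplex. -/
def omegaL (s : V → ℝ) : List V → ℤ
  | [a, b, c] => om s a b c
  | _ => 0

/-- Evaluation of the winding cocycle on chains. -/
def omega (s : V → ℝ) : Ch V →ₗ[ℤ] ℤ := Finsupp.linearCombination ℤ (omegaL s)

lemma omega_single (s : V → ℝ) (l : List V) : omega s (Finsupp.single l 1) = omegaL s l := by
  simp [omega]

lemma om_cocycle (s : V → ℝ) (a b c d : V) :
    om s b c d - om s a c d + om s a b d - om s a b c = 0 := by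
  unfold om; ring

/-- The cap product is a chain map, except for a correction in degree two due to the
augmentation. -/
lemma bd_cap (s : V → ℝ) (x : Ch V) : bd (cap s x) = cap s (bd x) + omega s x • nilc := by
  refine ch_ext (f := bd ∘ₗ cap s) (g := cap s ∘ₗ bd + (omega s).smulRight nilc)
    (fun l => ?_) x
  match l with
  | [] => simp [cap_single, capL, omega_single, omegaL]
  | [v] => simp [bd_single, bdL, cap_single, capL, omega_single, omegaL]
  | [v, w] => simp [bd_single, bdL, cap_single, capL, omega_single, omegaL]
  | [a, b, c] => simp [bd_single, bdL, cap_single, capL, omega_single, omegaL, nilc,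
      -Finsupp.smul_single]
  | a :: b :: c :: d :: l =>
    have h : ∀ x : Ch V, cap s (cone a (cone b (cone c x))) = om s a b c • cone c x := fun x =>
      ch_ext (f := cap s ∘ₗ cone a ∘ₗ cone b ∘ₗ cone c) (g := om s a b c • cone c)
        (fun l => by simp [cap_single, capL]) x
    have hc := om_cocycle s a b c d
    have e1 : bd (Finsupp.single (a :: b :: c :: d :: l) 1) =
        Finsupp.single (b :: c :: d :: l) 1 - Finsupp.single (a :: c :: d :: l) 1 +
        Finsupp.single (a :: b :: d :: l) 1 - cone a (cone b (cone c (bdL (d :: l)))) := by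
      rw [bd_single, bdL, bdL, bdL]; simp only [map_sub, cone_single]; abel
    have e2 : bd (Finsupp.single (c :: d :: l) 1) =
        Finsupp.single (d :: l) 1 - cone c (bdL (d :: l)) := by rw [bd_single, bdL]
    simp only [LinearMap.comp_apply, LinearMap.add_apply, LinearMap.smulRight_apply, e1, map_sub,
      map_add, cap_single, capL, h, omega_single, omegaL, map_smul, e2]
    have : om s a b c = om s b c d - om s a c d + om s a b d := by linarith
    rw [this]
    module

/-- The winding cocycle is invariant under vertex maps that rotate the angle by a constant. -/
lemma om_map (s : V → ℝ) (φ : V → V) (z : ℝ) (h : ∀ v, ∃ n : ℤ, s (φ v) = s v + z + n)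
    (a b c : V) : om s (φ a) (φ b) (φ c) = om s a b c := by
  obtain ⟨na, ha⟩ := h a
  obtain ⟨nb, hb⟩ := h b
  obtain ⟨nc, hc⟩ := h c
  have key : ∀ (x y : ℝ) (m n : ℤ), round (x + z + m - (y + z + n)) = round (x - y) + (m - n) := by
    intro x y m n
    rw [← round_add_intCast]; congr 1; push_cast; ring
  unfold om
  rw [ha, hb, hc, key, key, key]; ring

lemma cap_push (s : V → ℝ) (φ : V → V) (z : ℝ) (h : ∀ v, ∃ n : ℤ, s (φ v) = s v + z + n)
    (x : Ch V) : cap s (push φ x) = push φ (cap s x) := by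
  refine ch_ext (f := cap s ∘ₗ push φ) (g := push φ ∘ₗ cap s) (fun l => ?_) x
  match l with
  | [] => simp [cap_single, capL]
  | [v] => simp [cap_single, capL]
  | [v, w] => simp [cap_single, capL]
  | a :: b :: c :: l => simp [cap_single, capL, om_map s φ z h]

/-- The cup product of the winding cocycles of the angle functions in the list. -/
def Om : List (V → ℝ) → (Ch V →ₗ[ℤ] ℤ)
  | [] => aug
  | s :: ss => Om ss ∘ₗ cap s

lemma Om_nilc (ss : List (V → ℝ)) : Om ss nilc = 0 := by
  induction ss with
  | nil => simp [Om, nilc, aug_single]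
  | cons s ss ih => simp [Om, nilc, cap_single, capL]

lemma Om_bd (ss : List (V → ℝ)) (x : Ch V) : Om ss (bd x) = 0 := by
  induction ss generalizing x with
  | nil => exact aug_bd x
  | cons s ss ih =>
    have : cap s (bd x) = bd (cap s x) - omega s x • nilc := by rw [bd_cap]; abel
    simp [Om, this, ih, Om_nilc]

lemma Om_push (ss : List (V → ℝ)) (φ : V → V)
    (h : ∀ s ∈ ss, ∃ z : ℝ, ∀ v, ∃ n : ℤ, s (φ v) = s v + z + n) (x : Ch V) :
    Om ss (push φ x) = Om ss x := by
  induction ss generalizing x with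
  | nil => exact aug_push φ x
  | cons s ss ih =>
    obtain ⟨z, hz⟩ := h s (by simp)
    simp only [Om, LinearMap.comp_apply]
    rw [cap_push s φ z hz, ih fun s hs => h s (by simp [hs])]

/-- The cup product vanishes on a simplex as soon as one of the factors vanishes on all of its
two-dimensional faces. -/
lemma Om_eq_zero (ss : List (V → ℝ)) (l : List V)
    (h : ∃ s ∈ ss, ∀ a ∈ l, ∀ b ∈ l, ∀ c ∈ l, om s a b c = 0) :
    Om ss (Finsupp.single l 1) = 0 := by
  induction ss generalizing l with
  | nil => simp at h
  | cons s ss ih =>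
    match l with
    | [] => simp [Om, cap_single, capL]
    | [v] => simp [Om, cap_single, capL]
    | [v, w] => simp [Om, cap_single, capL]
    | a :: b :: c :: l =>
      simp only [Om, LinearMap.comp_apply, cap_single, capL, map_smul]
      obtain ⟨s', hs', h⟩ := h
      rcases List.mem_cons.1 hs' with rfl | hs'
      · rw [h a (by simp) b (by simp) c (by simp), zero_smul]
      · rw [ih (c :: l) ⟨s', hs', fun x hx y hy z hz => h x (by simp_all) y (by simp_all) z
          (by simp_all)⟩, smul_zero]

end Chains

/-! ### Systems of chains and the evaluation of cup products -/

section Systems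

variable {V : Type*} {e : ℕ}

/-- A chain map from the tensor product of `e` standard periodic
resolutions of `ℤ/p` to the augmented ordered chains on `V`, where the `i`-th generator acts on
`V` by `T i`.  The chain `c μ` is the image of the basis element of multidegree `μ`. -/
structure IsSys (p : ℕ) (T : Fin e → V → V) (c : (Fin e → ℤ) → Ch V) : Prop where
  bdc : ∀ μ, bd (c μ) = del p (fun i => push (T i)) c μ + if μ = 0 then nilc else 0
  len : ∀ μ, c μ ∈ sup {l | (l.length : ℤ) = (∑ i, μ i) + 1}
  neg : ∀ μ i, μ i < 0 → c μ = 0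

/-- The fractional winding of an edge; zero on simplices of other dimensions. -/
def wL (s : V → ℝ) : List V → ℝ
  | [a, b] => (s b - s a) - round (s b - s a)
  | _ => 0

/-- The fractional winding of one-dimensional chains. -/
def wf (s : V → ℝ) : Ch V →ₗ[ℤ] ℝ := Finsupp.linearCombination ℤ (wL s)

lemma wf_single (s : V → ℝ) (l : List V) : wf s (Finsupp.single l 1) = wL s l := by simp [wf]

/-- The integral part of the winding of a simplex; zero in dimensions other than one. -/
def rhoL (s : V → ℝ) : List V → ℤ
  | [a, b] => round (s b - s a)
  | _ => 0

/-- The integral part of the winding of an edge. -/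
def rho (s : V → ℝ) : Ch V →ₗ[ℤ] ℤ := Finsupp.linearCombination ℤ (rhoL s)

lemma rho_single (s : V → ℝ) (l : List V) : rho s (Finsupp.single l 1) = rhoL s l := by
  simp [rho]

/-- The angle at a zero-dimensional simplex; zero in other dimensions. -/
def potL (s : V → ℝ) : List V → ℝ
  | [a] => s a
  | _ => 0

/-- The linear extension of the angle function to zero-dimensional chains. -/
def pot (s : V → ℝ) : Ch V →ₗ[ℤ] ℝ := Finsupp.linearCombination ℤ (potL s)

lemma pot_single (s : V → ℝ) (l : List V) : pot s (Finsupp.single l 1) = potL s l := by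
  simp [pot]

/-- The ring embedding `ℤ → ℝ` as a linear map. -/
def castL : ℤ →ₗ[ℤ] ℝ := (Int.castAddHom ℝ).toIntLinearMap

@[simp] lemma castL_apply (z : ℤ) : castL z = (z : ℝ) := rfl

/-- The real coboundary of the fractional winding is the winding cocycle. -/
lemma wf_bd (s : V → ℝ) (x : Ch V) : wf s (bd x) = omega s x := by
  refine ch_ext (f := wf s ∘ₗ bd) (g := castL ∘ₗ omega s) (fun l => ?_) x
  match l with
  | [] => simp [omega_single, omegaL]
  | [v] => simp [bd_single, bdL, wf_single, wL, omega_single, omegaL]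
  | [v, w] => simp [bd_single, bdL, wf_single, wL, omega_single, omegaL]
  | [a, b, c] =>
    simp [bd_single, bdL, wf_single, wL, omega_single, omegaL, om]
    ring
  | a :: b :: c :: d :: l =>
    have h : ∀ x : Ch V, wf s (cone a (cone b (cone c x))) = 0 := fun x =>
      ch_ext (f := wf s ∘ₗ cone a ∘ₗ cone b ∘ₗ cone c) (g := 0)
        (fun l => by simp [wf_single, wL]) x
    simp [bd_single, bdL, wf_single, wL, omega_single, omegaL, h]

lemma wf_eq (s : V → ℝ) (x : Ch V) : wf s x = pot s (bd x) - rho s x := by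
  refine ch_ext (f := wf s) (g := pot s ∘ₗ bd - castL ∘ₗ rho s) (fun l => ?_) x
  match l with
  | [] => simp [wf_single, wL, rho_single, rhoL]
  | [v] => simp [bd_single, bdL, wf_single, wL, rho_single, rhoL, pot_single, potL]
  | [v, w] => simp [bd_single, bdL, wf_single, wL, rho_single, rhoL, pot_single, potL]
  | a :: b :: c :: l =>
    have h : ∀ x : Ch V, pot s (cone a (cone b x)) = 0 := fun x =>
      ch_ext (f := pot s ∘ₗ cone a ∘ₗ cone b) (g := 0)
        (fun l => by simp [pot_single, potL]) x
    simp [bd_single, bdL, wf_single, wL, rho_single, rhoL, pot_single, potL, h]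

lemma wf_push (s : V → ℝ) (φ : V → V) (z : ℝ) (h : ∀ v, ∃ n : ℤ, s (φ v) = s v + z + n)
    (x : Ch V) : wf s (push φ x) = wf s x := by
  refine ch_ext (f := wf s ∘ₗ push φ) (g := wf s) (fun l => ?_) x
  match l with
  | [] => simp [wf_single, wL]
  | [v] => simp [wf_single, wL]
  | [a, b] =>
    obtain ⟨m, ha⟩ := h a
    obtain ⟨n, hb⟩ := h b
    have : s (φ b) - s (φ a) = s b - s a + ((n - m : ℤ) : ℝ) := by
      rw [ha, hb]; push_cast; ring
    simp only [LinearMap.comp_apply, push_single, List.map, wf_single, wL, this,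
      round_add_intCast]
    push_cast; ring
  | a :: b :: c :: l => simp [wf_single, wL]

lemma pot_push (s : V → ℝ) (φ : V → V) (z : ℝ) (h : ∀ v, ∃ n : ℤ, s (φ v) = s v + z + n)
    (x : Ch V) : ∃ n : ℤ, pot s (push φ x) = pot s x + aug x * z + n := by
  choose n hn using h
  let nL : List V → ℤ := fun l => match l with
    | [a] => n a
    | _ => 0
  refine ⟨Finsupp.linearCombination ℤ nL x, ?_⟩
  have := ch_ext (f := pot s ∘ₗ push φ)
    (g := pot s + (castL ∘ₗ aug).smulRight z + castL ∘ₗ Finsupp.linearCombination ℤ nL)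
    (fun l => ?_) x
  · simpa using this
  · match l with
    | [] => simp [pot_single, potL, aug_single, nL]
    | [a] => simp [pot_single, potL, aug_single, nL, hn]
    | a :: b :: l => simp [pot_single, potL, aug_single, nL]

lemma bd_of_len_one {x : Ch V} (hx : x ∈ sup {l : List V | l.length = 1}) :
    bd x = aug x • nilc := by
  refine eq_of_sup (f := bd) (g := aug.smulRight nilc) (fun l hl => ?_) hx
  obtain ⟨a, rfl⟩ := List.length_eq_one_iff.1 hl
  simp [bd_single, bdL, aug_single, nilc]

namespace IsSys

variable {p : ℕ} {T : Fin e → V → V} {c : (Fin e → ℤ) → Ch V}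

lemma len' (h : IsSys p T c) {μ : Fin e → ℤ} {n : ℕ} (hn : ∑ i, μ i + 1 = n) :
    c μ ∈ sup {l | l.length = n} :=
  sup_mono (fun l (hl : (l.length : ℤ) = _) => by
    rw [hn] at hl; exact_mod_cast hl) (h.len μ)

lemma zero_of_sum (h : IsSys p T c) {μ : Fin e → ℤ} (hμ : ∑ i, μ i < 0) : c μ = 0 := by
  obtain ⟨i, -, hi⟩ := Finset.exists_lt_of_sum_lt (f := μ) (g := 0) (s := Finset.univ)
    (by simpa using hμ)
  exact h.neg μ i hi

lemma aug_zero (h : IsSys p T c) : aug (c 0) = 1 := by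
  have h1 := h.bdc 0
  rw [bd_of_len_one (h.len' (by simp))] at h1
  have h2 : del p (fun i => push (T i)) c 0 = 0 := by
    refine Finset.sum_eq_zero fun i _ => ?_
    rw [h.neg (0 - Pi.single i 1) i (by simp)]; simp
  rw [h2] at h1
  have := DFunLike.congr_fun h1 []
  simpa [nilc] using this

lemma aug_eq (h : IsSys p T c) (μ : Fin e → ℤ) : aug (c μ) = if μ = 0 then 1 else 0 := by
  split_ifs with h0
  · rw [h0, h.aug_zero]
  by_cases hs : ∑ i, μ i = 0
  · have : ∃ i, μ i < 0 := by
      by_contra! hn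
      exact h0 (funext fun i => (Finset.sum_eq_zero_iff_of_nonneg (fun i _ => hn i)).1 hs i
        (Finset.mem_univ i))
    obtain ⟨i, hi⟩ := this
    rw [h.neg μ i hi, map_zero]
  · refine eq_of_sup (f := aug) (g := 0) (fun l hl => ?_) (h.len μ)
    rw [Set.mem_ofPred_eq] at hl
    have : l.length ≠ 1 := by intro hl'; rw [hl'] at hl; apply hs; push_cast at hl; linarith
    simp [aug_single, this]

variable {s : V → ℝ} {α : Fin e → ℤ}

lemma wf_eq (h : IsSys p T c) (hs : ∀ i v, ∃ n : ℤ, s (T i v) = s v + (α i : ℝ) / p + n)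
    (ν : Fin e → ℤ) :
    ∃ n : ℤ, wf s (c ν) = (∑ j, if ν = Pi.single j 1 then (α j : ℝ) / p else 0) + n := by
  by_cases hsum : ∑ i, ν i = 1
  · by_cases hneg : ∃ i, ν i < 0
    · obtain ⟨i, hi⟩ := hneg
      refine ⟨0, ?_⟩
      rw [h.neg ν i hi, map_zero, Finset.sum_eq_zero]
      · simp
      · intro j _
        rw [if_neg]
        rintro rfl
        have : (0 : ℤ) ≤ (Pi.single j 1 : Fin e → ℤ) i := by
          rw [Pi.single_apply]; split_ifs <;> simp
        omega
    · push Not at hneg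
      have : ∃ j, ν j ≠ 0 := by
        by_contra! h0
        simp [h0] at hsum
      obtain ⟨j, hj⟩ := this
      have hj1 : 1 ≤ ν j := by have := hneg j; omega
      have hν : ν = Pi.single j 1 := by
        have h1 := sum_sub_single ν j 1
        rw [hsum, sub_self] at h1
        have h2 := (Finset.sum_eq_zero_iff_of_nonneg (fun i _ => ?_)).1 h1
        · funext i
          have := h2 i (Finset.mem_univ i)
          simpa [sub_eq_zero] using this
        · by_cases hij : i = j
          · subst hij; simpa using hj1
          · simpa [hij] using hneg i
      subst hν
      have hd : del p (fun i => push (T i)) c (Pi.single j 1) =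
          push (T j) (c 0) - c 0 := by
        unfold del
        rw [Finset.sum_eq_single j]
        · have : sgn j (Pi.single j 1 : Fin e → ℤ) = 1 := by
            unfold sgn
            rw [Finset.sum_eq_zero]
            · simp
            · intro l hl
              simp only [Finset.mem_filter] at hl
              simp [hl.2.ne]
          simp [this, dop]
        · intro i _ hij
          rw [h.neg _ i (by simp [hij])]
          simp
        · simp
      obtain ⟨n, hn⟩ := pot_push s (T j) _ (hs j) (c 0)
      refine ⟨n - rho s (c (Pi.single j 1)), ?_⟩
      rw [WCT.wf_eq, h.bdc, hd, if_neg, add_zero, map_sub, hn, h.aug_zero,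
        Finset.sum_eq_single j]
      · simp; ring
      · intro i _ hij
        rw [if_neg]
        intro h'
        have := congrFun h' j
        simp [Ne.symm hij] at this
      · simp
      · simp
  · refine ⟨0, ?_⟩
    rw [Finset.sum_eq_zero]
    · simp only [Int.cast_zero, add_zero]
      refine eq_of_sup (f := wf s) (g := 0) (fun l hl => ?_) (h.len ν)
      match l with
      | [] => simp [wf_single, wL]
      | [v] => simp [wf_single, wL]
      | [a, b] =>
        exfalso; apply hsum
        simp at hl; omega
      | a :: b :: c :: l => simp [wf_single, wL]
    · intro j _
      rw [if_neg]
      rintro rfl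
      simp at hsum

/-- The winding cocycle of an angle function represents a Bockstein class: modulo `p` it evaluates
to `α i` on the degree `2` chain in direction `i`, and to zero otherwise. -/
lemma omega_eq (h : IsSys p T c) (hp : p ≠ 0)
    (hs : ∀ i v, ∃ n : ℤ, s (T i v) = s v + (α i : ℝ) / p + n) (μ : Fin e → ℤ) :
    ∃ q : ℤ, omega s (c μ) = (∑ i, if μ = Pi.single i 2 then α i else 0) + p * q := by
  have hp' : (p : ℝ) ≠ 0 := by exact_mod_cast hp
  have key : ∀ i, ∃ q : ℤ, wf s (sgn i μ • dop p (push (T i)) (μ i) (c (μ - Pi.single i 1))) =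
      (if μ = Pi.single i 2 then (α i : ℝ) else 0) + p * q := by
    intro i
    rw [map_smul, apply_dop p _ (wf s) (wf_push s (T i) _ (hs i))]
    by_cases hev : Even (μ i)
    · obtain ⟨n, hn⟩ := h.wf_eq hs (μ - Pi.single i 1)
      refine ⟨sgn i μ * n, ?_⟩
      rw [if_pos hev, hn, Finset.sum_eq_single i]
      · by_cases h2 : μ = Pi.single i 2
        · have e1 : μ - Pi.single i 1 = Pi.single i 1 := by
            rw [h2, ← Pi.single_sub]; norm_num
          have e2 : sgn i μ = 1 := by
            unfold sgn
            rw [Finset.sum_eq_zero]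
            · simp
            · intro l hl
              simp only [Finset.mem_filter] at hl
              simp [h2, hl.2.ne]
          rw [if_pos h2, if_pos e1, e2]
          simp; field_simp
        · have e1 : μ - Pi.single i 1 ≠ Pi.single i 1 := by
            intro h'
            apply h2
            rw [sub_eq_iff_eq_add.1 h', ← Pi.single_add]; norm_num
          rw [if_neg h2, if_neg e1]
          simp; ring
      · intro j _ hj
        rw [if_neg]
        intro h'
        have := congrFun h' i
        simp [Ne.symm hj] at this
        rw [sub_eq_zero.1 this] at hev
        exact absurd hev (by decide)
      · simp
    · refine ⟨0, ?_⟩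
      rw [if_neg hev, if_neg]
      · simp
      · intro h'; apply hev; rw [h']; simp
  choose q hq using key
  refine ⟨∑ i, q i, ?_⟩
  have hn : wf s (nilc : Ch V) = 0 := by simp [nilc, wf_single, wL]
  have : (omega s (c μ) : ℝ) =
      (∑ i, if μ = Pi.single i 2 then (α i : ℝ) else 0) + p * ∑ i, (q i : ℝ) := by
    rw [← wf_bd, h.bdc, map_add]
    have : wf s (if μ = 0 then nilc else 0) = 0 := by split_ifs <;> simp [hn]
    rw [this, add_zero, del, map_sum, Finset.sum_congr rfl fun i _ => hq i,
      Finset.sum_add_distrib, Finset.mul_sum]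
  exact_mod_cast this

/-- Evaluating one more cup factor amounts to shifting the multidegree by two in each direction. -/
lemma Om_cons (h : IsSys p T c) (hp : p ≠ 0) (hTp : ∀ i, (T i)^[p] = id)
    (hTc : ∀ i j v, T i (T j v) = T j (T i v)) (v₀ : V)
    (hs : ∀ i v, ∃ n : ℤ, s (T i v) = s v + (α i : ℝ) / p + n)
    (ss : List (V → ℝ))
    (hss : ∀ s ∈ ss, ∀ i, ∃ z : ℝ, ∀ v, ∃ n : ℤ, s (T i v) = s v + z + n) (μ : Fin e → ℤ) :
    (p : ℤ) ∣ Om (s :: ss) (c μ) - ∑ i, α i * Om ss (c (μ - Pi.single i 2)) := by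
  have key := dvd_of_system p (fun i => push (T i))
    (fun i => by rw [push_pow, hTp]; exact LinearMap.ext fun x => push_id' x)
    (fun i j => LinearMap.ext fun x => by
      show push (T i) (push (T j) x) = push (T j) (push (T i) x)
      rw [push_comp, push_comp]
      congr 2
      funext v; exact hTc i j v)
    bd (cone v₀) (fun i x => bd_push _ _) (bd_cone v₀) (Om ss)
    (fun i x => Om_push ss (T i) (fun s hs => hss s hs i) x) (Om_bd ss)
    (fun μ => cap s (c μ) - ∑ i, α i • c (μ - Pi.single i 2)) ?_ ?_ μ
  · simpa [Om, map_sum] using key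
  · intro μ hμ
    rw [h.zero_of_sum hμ, map_zero, Finset.sum_eq_zero, sub_zero]
    intro i _
    rw [h.zero_of_sum, smul_zero]
    rw [sum_sub_single]; omega
  · intro μ
    obtain ⟨q, hq⟩ := h.omega_eq hp hs μ
    refine ⟨q • nilc, ?_⟩
    have e1 : cap s (del p (fun i => push (T i)) c μ) =
        del p (fun i => push (T i)) (fun ν => cap s (c ν)) μ :=
      del_map p _ _ (cap s) (fun i x => cap_push s (T i) _ (hs i) x) c μ
    have e2 : cap s (nilc : Ch V) = 0 := by simp [nilc, cap_single, capL]
    have e3 : cap s (if μ = 0 then (nilc : Ch V) else 0) = 0 := by split_ifs <;> simp [e2]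
    have e4 : ∀ i, del p (fun i => push (T i)) c (μ - Pi.single i 2) =
        del p (fun i => push (T i)) (fun ν => c (ν - Pi.single i 2)) μ := by
      intro i
      unfold del
      refine Finset.sum_congr rfl fun j _ => ?_
      rw [sgn_sub_two, sub_right_comm]
      congr 2
      unfold dop
      have : Even ((μ - Pi.single i 2 : Fin e → ℤ) j) ↔ Even (μ j) := by
        by_cases hij : j = i
        · subst hij; simp
        · simp [hij]
      simp only [this]
    have e5 : del p (fun i => push (T i))
        (fun μ => cap s (c μ) - ∑ i, α i • c (μ - Pi.single i 2)) μ =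
        del p (fun i => push (T i)) (fun ν => cap s (c ν)) μ -
        ∑ i, α i • del p (fun i => push (T i)) (fun ν => c (ν - Pi.single i 2)) μ := by
      unfold del
      simp only [map_sub, map_sum, smul_sub, Finset.sum_sub_distrib, Finset.smul_sum, map_smul]
      congr 1
      rw [Finset.sum_comm]
      refine Finset.sum_congr rfl fun i _ => Finset.sum_congr rfl fun j _ => ?_
      rw [smul_comm]
    have e6 : ∀ i, bd (c (μ - Pi.single i 2)) =
        del p (fun i => push (T i)) (fun ν => c (ν - Pi.single i 2)) μ +
        if μ = Pi.single i 2 then nilc else 0 := by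
      intro i
      rw [h.bdc, e4]; simp only [sub_eq_zero]
    rw [e5, map_sub, bd_cap, h.bdc, map_add, e1, e3, hq, map_sum]
    simp only [map_smul, e6, smul_add, Finset.sum_add_distrib, add_smul, Finset.sum_smul]
    have e7 : ∑ i, (if μ = Pi.single i 2 then α i else 0) • (nilc : Ch V) =
        ∑ i, α i • (if μ = Pi.single i 2 then (nilc : Ch V) else 0) :=
      Finset.sum_congr rfl fun i _ => by split_ifs <;> simp
    rw [e7, mul_smul]
    abel

open MvPolynomial in
/-- Modulo `p`, the cup product of winding cocycles evaluates on the even multidegrees to the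
coefficients of a product of linear forms. -/
lemma Om_coeff (h : IsSys p T c) (hp : p ≠ 0) (hTp : ∀ i, (T i)^[p] = id)
    (hTc : ∀ i j v, T i (T j v) = T j (T i v)) (v₀ : V) (L : List ((V → ℝ) × (Fin e → ℤ)))
    (hL : ∀ x ∈ L, ∀ i v, ∃ n : ℤ, x.1 (T i v) = x.1 v + (x.2 i : ℝ) / p + n)
    (n : Fin e →₀ ℕ) :
    ((Om (L.map Prod.fst) (c fun i => 2 * (n i : ℤ)) : ℤ) : ZMod p) =
      coeff n ((L.map fun x => ∑ i, C ((x.2 i : ℤ) : ZMod p) * X i).prod) := by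
  induction L generalizing n with
  | nil =>
    have : (fun i => 2 * (n i : ℤ)) = 0 ↔ 0 = n := by
      constructor
      · intro h0
        ext i
        have := congrFun h0 i
        have h2 : n i = 0 := by simpa using this
        simp [h2]
      · rintro rfl; funext i; simp
    simp [Om, h.aug_eq, this, coeff_one]
  | cons x L ih =>
    have h1 := h.Om_cons hp hTp hTc v₀ (hL x (by simp)) (L.map Prod.fst)
      (fun s hs i => by
        obtain ⟨y, hy, rfl⟩ := List.mem_map.1 hs
        exact ⟨_, hL y (by simp [hy]) i⟩) (fun i => 2 * (n i : ℤ))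
    rw [← ZMod.intCast_zmod_eq_zero_iff_dvd, Int.cast_sub, sub_eq_zero] at h1
    rw [List.map_cons, List.map_cons, List.prod_cons, h1, Finset.sum_mul, coeff_sum]
    push_cast
    refine Finset.sum_congr rfl fun i _ => ?_
    rw [mul_assoc, coeff_C_mul, coeff_X_mul']
    congr 1
    split_ifs with hi
    · rw [← ih (fun y hy => hL y (by simp [hy]))]
      congr 3
      funext j
      rw [Finsupp.mem_support_iff] at hi
      by_cases hij : j = i
      · subst hij
        simp [Nat.cast_sub (Nat.one_le_iff_ne_zero.2 hi)]
        ring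
      · simp [hij]
    · have : n i = 0 := by simpa using hi
      rw [h.neg _ i (by simp [this]), map_zero, Int.cast_zero]

lemma Om_single_eq_zero_of_length (ss : List (V → ℝ)) (l : List V)
    (hl : l.length ≠ 2 * ss.length + 1) : Om ss (Finsupp.single l 1) = 0 := by
  induction ss generalizing l with
  | nil => simpa [Om, aug_single] using hl
  | cons s ss ih =>
    match l with
    | [] => simp [Om, cap_single, capL]
    | [v] => simp [Om, cap_single, capL]
    | [v, w] => simp [Om, cap_single, capL]
    | a :: b :: c :: l =>
      simp only [Om, LinearMap.comp_apply, cap_single, capL, map_smul]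
      rw [ih, smul_zero]
      simp at hl ⊢
      omega

open MvPolynomial in
/-- The algebraic core of the Borsuk–Ulam argument: cup products of `m` nontrivial Bockstein classes
do not vanish in degree `2 * m`. -/
lemma exists_Om_ne_zero (h : IsSys p T c) (hp : p.Prime) (hTp : ∀ i, (T i)^[p] = id)
    (hTc : ∀ i j v, T i (T j v) = T j (T i v)) (v₀ : V) (L : List ((V → ℝ) × (Fin e → ℤ)))
    (hL : ∀ x ∈ L, ∀ i v, ∃ n : ℤ, x.1 (T i v) = x.1 v + (x.2 i : ℝ) / p + n)
    (hα : ∀ x ∈ L, ∃ i, ((x.2 i : ℤ) : ZMod p) ≠ 0) :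
    ∃ μ : Fin e → ℤ, ∑ i, μ i = 2 * L.length ∧ Om (L.map Prod.fst) (c μ) ≠ 0 := by
  have := Fact.mk hp
  have hne : (L.map fun x => ∑ i, C ((x.2 i : ℤ) : ZMod p) * X i).prod ≠ 0 := by
    rw [Ne, List.prod_eq_zero_iff, List.mem_map]
    rintro ⟨x, hx, hx0⟩
    obtain ⟨i, hi⟩ := hα x hx
    apply hi
    have := congrArg (coeff (Finsupp.single i 1)) hx0
    rw [coeff_sum, Finset.sum_eq_single i] at this
    · rwa [coeff_C_mul, coeff_X, if_pos rfl, mul_one, coeff_zero] at this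
    · intro j _ hj
      rw [coeff_C_mul, coeff_X, if_neg, mul_zero]
      intro h'
      rw [Finsupp.single_left_inj one_ne_zero] at h'
      exact hj h'
    · simp
  obtain ⟨n, hn⟩ := MvPolynomial.ne_zero_iff.1 hne
  rw [← h.Om_coeff hp.ne_zero hTp hTc v₀ L hL n] at hn
  have hn' : Om (L.map Prod.fst) (c fun i => 2 * (n i : ℤ)) ≠ 0 := by
    intro h0; rw [h0] at hn; simp at hn
  refine ⟨_, ?_, hn'⟩
  by_contra hsum
  apply hn'
  refine eq_of_sup (f := Om (L.map Prod.fst)) (g := 0) (fun l hl => ?_) (h.len _)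
  rw [Set.mem_ofPred_eq] at hl
  apply Om_single_eq_zero_of_length
  intro hl'
  apply hsum
  rw [hl'] at hl
  simp at hl ⊢
  omega

end IsSys

end Systems

/-! ### Existence and subdivision of systems -/

section Existence

variable {V W : Type*} {e : ℕ}

lemma dop_mem {M : Type*} [AddCommGroup M] (p : ℕ) (t : Module.End ℤ M) (S : Submodule ℤ M)
    (h : ∀ x ∈ S, t x ∈ S) (n : ℤ) {x : M} (hx : x ∈ S) : dop p t n x ∈ S := by
  have hpow : ∀ k : ℕ, (t ^ k) x ∈ S := by
    intro k
    induction k with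
    | zero => simpa using hx
    | succ k ih => rw [pow_succ']; exact h _ ih
  unfold dop
  split_ifs
  · rw [LinearMap.sum_apply]; exact S.sum_mem fun k _ => hpow k
  · exact S.sub_mem (h _ hx) hx

lemma del_mem {M : Type*} [AddCommGroup M] (p : ℕ) (τ : Fin e → Module.End ℤ M)
    (S : Submodule ℤ M) (h : ∀ i, ∀ x ∈ S, τ i x ∈ S) (c : (Fin e → ℤ) → M) (μ : Fin e → ℤ)
    (hc : ∀ i, c (μ - Pi.single i 1) ∈ S) : del p τ c μ ∈ S :=
  S.sum_mem fun i _ => S.smul_mem _ (dop_mem p _ S (h i) _ (hc i))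

lemma del_congr {M : Type*} [AddCommGroup M] (p : ℕ) (τ : Fin e → Module.End ℤ M)
    {c c' : (Fin e → ℤ) → M} {μ : Fin e → ℤ}
    (hc : ∀ i, c (μ - Pi.single i 1) = c' (μ - Pi.single i 1)) : del p τ c μ = del p τ c' μ :=
  Finset.sum_congr rfl fun i _ => by rw [hc i]

lemma del_add (p : ℕ) {M : Type*} [AddCommGroup M] (τ : Fin e → Module.End ℤ M)
    (c c' : (Fin e → ℤ) → M) (μ : Fin e → ℤ) :
    del p τ (fun ν => c ν + c' ν) μ = del p τ c μ + del p τ c' μ := by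
  simp [del, smul_add, Finset.sum_add_distrib]

lemma push_mem_sup (φ : V → W) {A : Set (List V)} {B : Set (List W)}
    (h : ∀ l ∈ A, l.map φ ∈ B) {x : Ch V} (hx : x ∈ sup A) : push φ x ∈ sup B :=
  mem_of_sup (push φ) (fun l hl => by rw [push_single]; exact single_mem_sup (h l hl) 1) hx

lemma cone_mem_sup (v : V) {A B : Set (List V)}
    (h : ∀ l ∈ A, v :: l ∈ B) {x : Ch V} (hx : x ∈ sup A) : cone v x ∈ sup B :=
  mem_of_sup (cone v) (fun l hl => by rw [cone_single]; exact single_mem_sup (h l hl) 1) hx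

/-- The translation action on the vertices of the infinite join of copies of `(ℤ/p)^e`. -/
def rowT (p : ℕ) (i : Fin e) (x : ℕ × (Fin e → ZMod p)) : ℕ × (Fin e → ZMod p) :=
  (x.1, x.2 + Pi.single i 1)

lemma rowT_iterate (p : ℕ) (i : Fin e) (n : ℕ) (x : ℕ × (Fin e → ZMod p)) :
    (rowT p i)^[n] x = (x.1, x.2 + Pi.single i (n : ZMod p)) := by
  induction n with
  | zero => simp
  | succ n ih =>
    rw [Function.iterate_succ_apply', ih]
    simp only [rowT, add_assoc, ← Pi.single_add, Nat.cast_succ]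

/-- A system of chains on the infinite join: coning off each cycle with a vertex of a new row. -/
lemma exists_isSys_join (p : ℕ) : ∃ c : (Fin e → ℤ) → Ch (ℕ × (Fin e → ZMod p)),
    IsSys p (rowT p) c ∧ ∀ μ, c μ ∈ sup {l | l.Pairwise (fun a b => b.1 < a.1) ∧
      ∀ a ∈ l, (a.1 : ℤ) ≤ ∑ i, μ i} := by
  set τ : Fin e → Module.End ℤ (Ch (ℕ × (Fin e → ZMod p))) := fun i => push (rowT p i) with hτ
  have hτp : ∀ i, τ i ^ p = 1 := fun i => by
    rw [hτ]
    simp only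
    rw [push_pow]
    refine LinearMap.ext fun x => ?_
    have : (rowT p i)^[p] = id := by funext x; rw [rowT_iterate]; simp
    rw [this]; exact push_id' x
  have hτc : ∀ i j, Commute (τ i) (τ j) := fun i j => LinearMap.ext fun x => by
    show push (rowT p i) (push (rowT p j) x) = push (rowT p j) (push (rowT p i) x)
    rw [push_comp, push_comp]
    congr 2
    funext v
    simp only [Function.comp, rowT, add_right_comm]
  obtain ⟨c, h0, h1⟩ := exists_recursive_family p τ
    fun μ x => if ∀ i, 0 ≤ μ i then
      cone ((∑ i, μ i).toNat, 0) (x + if μ = 0 then nilc else 0) else 0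
  have hneg : ∀ μ i, μ i < 0 → c μ = 0 := by
    intro μ i hi
    by_cases hs : ∑ l, μ l < 0
    · exact h0 μ hs
    · rw [h1 μ (not_lt.1 hs), if_neg]
      intro h; exact absurd (h i) (not_le.2 hi)
  have hdneg : ∀ μ i, μ i < 0 → del p τ c μ = 0 := by
    intro μ i hi
    refine Finset.sum_eq_zero fun j _ => ?_
    rw [hneg _ i, map_zero, smul_zero]
    have : (0 : ℤ) ≤ (Pi.single j 1 : Fin e → ℤ) i := by
      rw [Pi.single_apply]; split_ifs <;> simp
    rw [Pi.sub_apply]; omega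
  have hnil : ∀ μ : Fin e → ℤ, del p τ (fun ν => if ν = 0 then nilc else 0) μ = 0 := by
    intro μ
    refine Finset.sum_eq_zero fun i _ => ?_
    beta_reduce
    by_cases h : μ - Pi.single i 1 = 0
    · have : μ i = 1 := by rw [sub_eq_zero.1 h]; simp
      rw [if_pos h, this]
      simp [dop, hτ]
    · rw [if_neg h, map_zero, smul_zero]
  have main : ∀ n : ℕ, ∀ μ : Fin e → ℤ, ∑ i, μ i < n →
      bd (c μ) = del p τ c μ + (if μ = 0 then nilc else 0) ∧
      c μ ∈ sup {l | (l.length : ℤ) = (∑ i, μ i) + 1 ∧ l.Pairwise (fun a b => b.1 < a.1) ∧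
        ∀ a ∈ l, (a.1 : ℤ) ≤ ∑ i, μ i} := by
    intro n
    induction n with
    | zero =>
      intro μ hμ
      rw [Nat.cast_zero] at hμ
      obtain ⟨i, -, hi⟩ := Finset.exists_lt_of_sum_lt (f := μ) (g := 0) (s := Finset.univ)
        (by simpa using hμ)
      rw [hdneg μ i hi, hneg μ i hi, if_neg]
      · simp
      · rintro rfl; simp at hi
    | succ n ih =>
      intro μ hμ
      by_cases hall : ∀ i, 0 ≤ μ i
      · have hs : 0 ≤ ∑ i, μ i := Finset.sum_nonneg fun i _ => hall i
        have hc : c μ = cone ((∑ i, μ i).toNat, 0)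
            (del p τ c μ + if μ = 0 then nilc else 0) := by
          rw [h1 μ hs, if_pos hall]
        have hpred : ∀ i, ∑ l, (μ - Pi.single i 1 : Fin e → ℤ) l < n := by
          intro i; rw [sum_sub_single]; push_cast at hμ; omega
        have hbd : bd (del p τ c μ + if μ = 0 then nilc else 0) = 0 := by
          have e1 : bd (if μ = 0 then (nilc : Ch (ℕ × (Fin e → ZMod p))) else 0) = 0 := by
            split_ifs <;> simp
          rw [map_add, e1, add_zero, del_map p τ τ bd (fun i x => bd_push _ _),
            del_congr (c' := fun ν => del p τ c ν + if ν = 0 then nilc else 0) p τ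
              (fun i => (ih _ (hpred i)).1), del_add, del_del p τ hτp hτc, hnil, add_zero]
        constructor
        · conv_lhs => rw [hc]
          rw [bd_cone, hbd, map_zero, sub_zero]
        · rw [hc]
          refine cone_mem_sup _ (A := {l | (l.length : ℤ) = ∑ i, μ i ∧
            l.Pairwise (fun a b => b.1 < a.1) ∧ ∀ a ∈ l, (a.1 : ℤ) ≤ (∑ i, μ i) - 1}) ?_ ?_
          · rintro l ⟨hl1, hl2, hl3⟩
            refine ⟨by simp [hl1], List.pairwise_cons.2 ⟨fun a ha => ?_, hl2⟩, ?_⟩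
            · have := hl3 a ha
              show a.1 < (∑ i, μ i).toNat
              omega
            · intro a ha
              rcases List.mem_cons.1 ha with rfl | ha
              · show (((∑ i, μ i).toNat : ℕ) : ℤ) ≤ _
                omega
              · have := hl3 a ha
                omega
          · refine Submodule.add_mem _ (del_mem p τ _ (fun i x hx => ?_) c μ fun i => ?_) ?_
            · refine push_mem_sup _ ?_ hx
              rintro l ⟨hl1, hl2, hl3⟩
              refine ⟨by simpa using hl1, ?_, ?_⟩
              · rw [List.pairwise_map]; exact hl2
              · intro a ha
                obtain ⟨b, hb, rfl⟩ := List.mem_map.1 ha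
                exact hl3 b hb
            · refine sup_mono ?_ (ih _ (hpred i)).2
              rintro l ⟨hl1, hl2, hl3⟩
              rw [sum_sub_single] at hl1 hl3
              exact ⟨by omega, hl2, hl3⟩
            · split_ifs with hz
              · refine single_mem_sup ?_ 1
                subst hz
                simp
              · exact Submodule.zero_mem _
      · push Not at hall
        obtain ⟨i, hi⟩ := hall
        rw [hdneg μ i hi, hneg μ i hi, if_neg]
        · simp
        · rintro rfl; simp at hi
  have main' : ∀ μ : Fin e → ℤ, ∑ i, μ i < (((∑ i, μ i).toNat + 1 : ℕ) : ℤ) := by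
    intro μ; push_cast; omega
  exact ⟨c, ⟨fun μ => (main _ μ (main' μ)).1,
    fun μ => sup_mono (fun l hl => hl.1) (main _ μ (main' μ)).2, hneg⟩,
    fun μ => sup_mono (fun l hl => hl.2) (main _ μ (main' μ)).2⟩

/-- An equivariant vertex map transports systems. -/
lemma IsSys.push {p : ℕ} {T : Fin e → V → V} {T' : Fin e → W → W} {c : (Fin e → ℤ) → Ch V}
    (h : IsSys p T c) (φ : V → W) (hφ : ∀ i v, φ (T i v) = T' i (φ v)) :
    IsSys p T' (fun μ => WCT.push φ (c μ)) where
  bdc μ := by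
    rw [bd_push, h.bdc, map_add, del_map p _ (fun i => WCT.push (T' i)) (WCT.push φ)]
    · congr 1
      split_ifs <;> simp
    · intro i x
      rw [push_comp, push_comp]
      congr 2
      funext v; exact hφ i v
  len μ := push_mem_sup φ (fun l hl => by simpa using hl) (h.len μ)
  neg μ i hi := by rw [h.neg μ i hi, map_zero]

lemma bdL_mem (l : List V) : bdL l ∈ sup {m | m.Sublist l ∧ m.length + 1 = l.length} := by
  induction l with
  | nil => exact Submodule.zero_mem _
  | cons v l ih =>
    refine Submodule.sub_mem _ (single_mem_sup (by exact ⟨List.sublist_cons_self v l, by simp⟩) 1)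
      (cone_mem_sup v ?_ ih)
    rintro m ⟨hm1, hm2⟩
    exact ⟨hm1.cons_cons v, by simp [hm2]⟩

/-- Subdivision of chains of simplices with at most `n` vertices, where `b v l` is the new vertex
in the simplex `v :: l`. -/
def sdn (b : V → List V → V) : ℕ → Module.End ℤ (Ch V)
  | 0 => Finsupp.linearCombination ℤ fun l => match l with
    | [] => nilc
    | _ :: _ => 0
  | n + 1 => Finsupp.linearCombination ℤ fun l => match l with
    | [] => nilc
    | v :: l => cone (b v l) (sdn b n (bdL (v :: l)))

lemma sdn_nil (b : V → List V → V) (n : ℕ) : sdn b n (Finsupp.single [] 1) = nilc := by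
  cases n <;> simp [sdn]

lemma sdn_nilc (b : V → List V → V) (n : ℕ) : sdn b n nilc = nilc := sdn_nil b n

lemma sdn_succ_cons (b : V → List V → V) (n : ℕ) (v : V) (l : List V) :
    sdn b (n + 1) (Finsupp.single (v :: l) 1) = cone (b v l) (sdn b n (bdL (v :: l))) := by
  simp [sdn]

lemma bd_sdn_zero (b : V → List V → V) (x : Ch V) : bd (sdn b 0 x) = 0 := by
  refine ch_ext (f := bd ∘ₗ sdn b 0) (g := 0) (fun l => ?_) x
  cases l <;> simp [sdn]

/-- Subdivision is a chain map; the boundary lowers the bound on the number of vertices by one. -/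
lemma bd_sdn (b : V → List V → V) (n : ℕ) (x : Ch V) :
    bd (sdn b (n + 1) x) = sdn b n (bd x) := by
  induction n generalizing x with
  | zero =>
    refine ch_ext (f := bd ∘ₗ sdn b 1) (g := sdn b 0 ∘ₗ bd) (fun l => ?_) x
    simp only [LinearMap.comp_apply]
    cases l with
    | nil => rw [sdn_nil]; simp
    | cons v l => rw [sdn_succ_cons, bd_cone, bd_sdn_zero, map_zero, sub_zero, bd_single]
  | succ n ih =>
    refine ch_ext (f := bd ∘ₗ sdn b (n + 2)) (g := sdn b (n + 1) ∘ₗ bd) (fun l => ?_) x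
    simp only [LinearMap.comp_apply]
    cases l with
    | nil => rw [sdn_nil]; simp
    | cons v l => rw [sdn_succ_cons, bd_cone, ih, ← bd_single, bd_bd, map_zero, map_zero, sub_zero]

lemma sdn_push (b : V → List V → V) (φ : V → V)
    (hb : ∀ v l, b (φ v) (l.map φ) = φ (b v l)) (n : ℕ) (x : Ch V) :
    sdn b n (push φ x) = push φ (sdn b n x) := by
  induction n generalizing x with
  | zero =>
    refine ch_ext (f := sdn b 0 ∘ₗ push φ) (g := push φ ∘ₗ sdn b 0) (fun l => ?_) x
    cases l <;> simp [sdn]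
  | succ n ih =>
    refine ch_ext (f := sdn b (n + 1) ∘ₗ push φ) (g := push φ ∘ₗ sdn b (n + 1)) (fun l => ?_) x
    simp only [LinearMap.comp_apply]
    cases l with
    | nil => simp [sdn_nil]
    | cons v l =>
      rw [push_single, List.map_cons, sdn_succ_cons, sdn_succ_cons, push_cone, hb, ← ih,
        ← bd_single, ← bd_single, ← bd_push, push_single, List.map_cons]

/-- Support of a subdivided simplex: any relation between simplices that is compatible with coning
off the subdivided faces relates a simplex to the simplices in its subdivision. -/
lemma sdn_mem (b : V → List V → V) (B : List V → List V → Prop) (h0 : B [] [])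
    (h1 : ∀ v l m l', m.Sublist (v :: l) → B m l' → B (v :: l) (b v l :: l'))
    (n : ℕ) (l : List V) (hl : l.length = n) :
    sdn b n (Finsupp.single l 1) ∈ sup {l' | l'.length = n ∧ B l l'} := by
  induction n generalizing l with
  | zero =>
    rw [List.length_eq_zero_iff] at hl
    subst hl
    rw [sdn_nil]
    exact single_mem_sup (by exact ⟨rfl, h0⟩) 1
  | succ n ih =>
    match l, hl with
    | v :: l, hl =>
      rw [sdn_succ_cons]
      refine cone_mem_sup _ (A := {l' | l'.length = n ∧ ∃ m, m.Sublist (v :: l) ∧ B m l'}) ?_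
        (mem_of_sup (sdn b n) ?_ (bdL_mem (v :: l)))
      · rintro l' ⟨hl1, m, hm, hB⟩
        exact ⟨by simp [hl1], h1 v l m l' hm hB⟩
      · rintro m ⟨hm1, hm2⟩
        refine sup_mono ?_ (ih m (by omega))
        rintro l' ⟨hl1, hB⟩
        exact ⟨hl1, m, hm1, hB⟩

/-- An equivariant subdivision transports systems. -/
lemma IsSys.sdn {p : ℕ} {T : Fin e → V → V} {c : (Fin e → ℤ) → Ch V}
    (h : IsSys p T c) (b : V → List V → V) (hb : ∀ i v l, b (T i v) (l.map (T i)) = T i (b v l)) :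
    IsSys p T (fun μ => WCT.sdn b ((∑ i, μ i) + 1).toNat (c μ)) where
  bdc μ := by
    by_cases hs : 0 ≤ ∑ i, μ i
    · have e1 : ((∑ i, μ i) + 1).toNat = (∑ i, μ i).toNat + 1 := by omega
      rw [e1, bd_sdn, h.bdc, map_add,
        del_map p _ (fun i => WCT.push (T i)) _ (fun i x => sdn_push b (T i) (hb i) _ x)]
      congr 1
      · refine del_congr p _ fun i => ?_
        simp only [sum_sub_single, sub_add_cancel]
      · split_ifs
        · exact sdn_nilc b _
        · simp
    · rw [h.zero_of_sum (not_le.1 hs), if_neg (by rintro rfl; simp at hs), map_zero,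
        map_zero, add_zero]
      refine (Finset.sum_eq_zero fun i _ => ?_).symm
      beta_reduce
      rw [h.zero_of_sum (μ := μ - Pi.single i 1) (by rw [sum_sub_single]; omega)]
      simp
  len μ := by
    by_cases hs : 0 ≤ ∑ i, μ i
    · refine mem_of_sup (WCT.sdn b _) (fun l hl => ?_) (h.len μ)
      rw [Set.mem_ofPred_eq] at hl
      refine sup_mono ?_ (sdn_mem b (fun _ _ => True) trivial (fun _ _ _ _ _ _ => trivial) _ l
        (by omega))
      rintro l' ⟨hl', -⟩
      rw [Set.mem_ofPred_eq]; omega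
    · rw [h.zero_of_sum (not_le.1 hs), map_zero]; exact Submodule.zero_mem _
  neg μ i hi := by rw [h.neg μ i hi, map_zero]

end Existence

/-! ### The join of copies of an elementary abelian group -/

section Geometry

variable {ι : Type*} [Fintype ι] {p e : ℕ} [NeZero p]

set_option linter.unusedSectionVars false

/-- The geometric realization of the `ι`-fold join of the discrete set `(ℤ/p)^e`: rows are indexed
by `ι`, and each row carries mass in at most one column. -/
def joinK (ι : Type*) [Fintype ι] (p e : ℕ) [NeZero p] : Set (ι → (Fin e → ZMod p) → ℝ) :=
  {y | (∀ i g, 0 ≤ y i g) ∧ ∑ i, ∑ g, y i g = 1 ∧ ∀ i g k, y i g ≠ 0 → y i k ≠ 0 → g = k}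

/-- The simplex of the join that selects the column `S i` in row `i`. -/
def joinFace (S : ι → (Fin e → ZMod p)) : Set (ι → (Fin e → ZMod p) → ℝ) :=
  {y | (∀ i g, 0 ≤ y i g) ∧ ∑ i, ∑ g, y i g = 1 ∧ ∀ i g, y i g ≠ 0 → g = S i}

lemma joinFace_subset (S : ι → (Fin e → ZMod p)) : joinFace S ⊆ joinK ι p e :=
  fun _ hy => ⟨hy.1, hy.2.1, fun i g g' h h' => (hy.2.2 i g h).trans (hy.2.2 i g' h').symm⟩

lemma convex_joinFace (S : ι → (Fin e → ZMod p)) : Convex ℝ (joinFace S) := by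
  intro x hx y hy a b ha hb hab
  refine ⟨fun i g => ?_, ?_, fun i g h => ?_⟩
  · exact add_nonneg (mul_nonneg ha (hx.1 i g)) (mul_nonneg hb (hy.1 i g))
  · have : ∑ i, ∑ g, (a • x + b • y) i g = a * ∑ i, ∑ g, x i g + b * ∑ i, ∑ g, y i g := by
      simp [Finset.sum_add_distrib, Finset.mul_sum]
    rw [this, hx.2.1, hy.2.1]; linarith
  · by_contra hg
    apply h
    have h1 : x i g = 0 := by by_contra h'; exact hg (hx.2.2 i g h')
    have h2 : y i g = 0 := by by_contra h'; exact hg (hy.2.2 i g h')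
    simp [h1, h2]

/-- Translation of the columns. -/
def shift (h : Fin e → ZMod p) :
    (ι → (Fin e → ZMod p) → ℝ) →ₗ[ℝ] (ι → (Fin e → ZMod p) → ℝ) where
  toFun y := fun i g => y i (g - h)
  map_add' _ _ := rfl
  map_smul' _ _ := rfl

lemma shift_apply (h : Fin e → ZMod p) (y : ι → (Fin e → ZMod p) → ℝ) (i : ι)
    (g : Fin e → ZMod p) : shift h y i g = y i (g - h) := rfl

lemma shift_shift (h h' : Fin e → ZMod p) (y : ι → (Fin e → ZMod p) → ℝ) :
    shift h (shift h' y) = shift (h + h') y := by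
  funext i g; simp only [shift_apply, sub_sub]

lemma shift_zero (y : ι → (Fin e → ZMod p) → ℝ) : shift 0 y = y := by
  funext i g; simp [shift_apply]

lemma shift_mem (h : Fin e → ZMod p) {y : ι → (Fin e → ZMod p) → ℝ} (hy : y ∈ joinK ι p e) :
    shift h y ∈ joinK ι p e := by
  refine ⟨fun i g => hy.1 i _, ?_, fun i g g' h1 h2 => ?_⟩
  · rw [← hy.2.1]
    exact Finset.sum_congr rfl fun i _ => (Equiv.subRight h).sum_comp (y i)
  · exact sub_left_injective (hy.2.2 i _ _ h1 h2)

lemma shift_mem_iff (h : Fin e → ZMod p) (y : ι → (Fin e → ZMod p) → ℝ) :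
    shift h y ∈ joinK ι p e ↔ y ∈ joinK ι p e := by
  refine ⟨fun hy => ?_, shift_mem h⟩
  have := shift_mem (-h) hy
  rwa [shift_shift, neg_add_cancel, shift_zero] at this

/-- The action of `(ℤ/p)^e` on the join. -/
def act (h : Fin e → ZMod p) (y : joinK ι p e) : joinK ι p e := ⟨shift h y, shift_mem h y.2⟩

lemma act_act (h h' : Fin e → ZMod p) (y : joinK ι p e) : act h (act h' y) = act (h + h') y :=
  Subtype.ext (shift_shift h h' y.1)

lemma act_iterate (h : Fin e → ZMod p) (n : ℕ) (y : joinK ι p e) :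
    (act h)^[n] y = act (n • h) y := by
  induction n with
  | zero => exact Subtype.ext (by simp [act, shift_zero])
  | succ n ih => rw [Function.iterate_succ_apply', ih, act_act, succ_nsmul']

/-- The action of the `i`-th generator. -/
def gen (i : Fin e) (y : joinK ι p e) : joinK ι p e := act (Pi.single i 1) y

lemma gen_iterate (i : Fin e) : (gen i : joinK ι p e → joinK ι p e)^[p] = id := by
  funext y
  have : p • (Pi.single i 1 : Fin e → ZMod p) = 0 := by
    rw [← Pi.single_smul]; simp
  show (act (Pi.single i 1))^[p] y = y
  rw [act_iterate, this]
  exact Subtype.ext (shift_zero _)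

lemma gen_comm (i j : Fin e) (y : joinK ι p e) : gen i (gen j y) = gen j (gen i y) := by
  unfold gen
  rw [act_act, act_act, add_comm]

/-- The barycenter of the points `v :: l`. -/
def cen {E : Type*} [AddCommGroup E] [Module ℝ E] (v : E) (l : List E) : E :=
  ((l.length + 1 : ℕ) : ℝ)⁻¹ • (v + l.sum)

lemma cen_mem_convexHull {E : Type*} [AddCommGroup E] [Module ℝ E] (v : E) (l : List E) :
    cen v l ∈ convexHull ℝ {x | x ∈ v :: l} := by
  have h : ∀ (l : List E) (s : Set E), Convex ℝ s → (∀ x ∈ l, x ∈ s) → l ≠ [] →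
      ((l.length : ℕ) : ℝ)⁻¹ • l.sum ∈ s := by
    intro l s hs
    induction l with
    | nil => simp
    | cons x l ih =>
      intro hl _
      by_cases hnil : l = []
      · subst hnil; simpa using hl x (by simp)
      · have h1 := ih (fun y hy => hl y (by simp [hy])) hnil
        have hpos : (0 : ℝ) < l.length := by
          exact_mod_cast List.length_pos_iff.2 hnil
        have := hs (hl x (by simp)) h1
          (a := ((l.length : ℝ) + 1)⁻¹) (b := l.length * ((l.length : ℝ) + 1)⁻¹)
          (by positivity) (by positivity) (by field_simp; ring)
        convert this using 1
        rw [List.sum_cons, smul_add, smul_smul, List.length_cons, Nat.cast_succ]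
        congr 2
        field_simp
  have := h (v :: l) (convexHull ℝ {x | x ∈ v :: l}) (convex_convexHull ℝ _)
    (fun x hx => subset_convexHull ℝ _ hx) (by simp)
  rwa [List.sum_cons] at this

lemma norm_sum_sub_le {E : Type*} [NormedAddCommGroup E] [NormedSpace ℝ E] (l : List E) (u : E)
    (D : ℝ) (h : ∀ x ∈ l, dist x u ≤ D) : ‖l.sum - (l.length : ℝ) • u‖ ≤ l.length * D := by
  induction l with
  | nil => simp
  | cons x l ih =>
    have h1 := ih fun y hy => h y (by simp [hy])
    have h2 := h x (by simp)
    rw [dist_eq_norm] at h2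
    have : (x :: l).sum - ((x :: l).length : ℝ) • u = (x - u) + (l.sum - (l.length : ℝ) • u) := by
      rw [List.sum_cons, List.length_cons, Nat.cast_succ, add_smul, one_smul]; abel
    rw [this, List.length_cons, Nat.cast_succ]
    refine (norm_add_le _ _).trans ?_
    linarith

lemma norm_sum_sub_le' {E : Type*} [NormedAddCommGroup E] [NormedSpace ℝ E] (l : List E) (u : E)
    (hu : u ∈ l) (D : ℝ) (h : ∀ x ∈ l, dist x u ≤ D) :
    ‖l.sum - (l.length : ℝ) • u‖ ≤ (l.length - 1) * D := by
  induction l with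
  | nil => simp at hu
  | cons x l ih =>
    have : (x :: l).sum - ((x :: l).length : ℝ) • u = (x - u) + (l.sum - (l.length : ℝ) • u) := by
      rw [List.sum_cons, List.length_cons, Nat.cast_succ, add_smul, one_smul]; abel
    rw [this, List.length_cons, Nat.cast_succ]
    have h2 := h x (by simp)
    rw [dist_eq_norm] at h2
    rcases List.mem_cons.1 hu with rfl | hu
    · rw [sub_self, zero_add]
      simpa using norm_sum_sub_le l u D fun y hy => h y (by simp [hy])
    · have h1 := ih hu fun y hy => h y (by simp [hy])
      refine (norm_add_le _ _).trans ?_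
      linarith

/-- The barycenter of a simplex with at most `M` vertices is at distance at most `(1 - 1/M) D` from
every point of the simplex, where `D` bounds the diameter. -/
lemma dist_cen_le {E : Type*} [NormedAddCommGroup E] [NormedSpace ℝ E] (v : E) (l : List E)
    (D : ℝ) (h : ∀ x ∈ v :: l, ∀ y ∈ v :: l, dist x y ≤ D) (M : ℕ) (hM : l.length + 1 ≤ M)
    {w : E} (hw : w ∈ convexHull ℝ {x | x ∈ v :: l}) : dist w (cen v l) ≤ (1 - 1 / M) * D := by
  have hD : 0 ≤ D := by simpa using h v (by simp) v (by simp)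
  have : convexHull ℝ {x | x ∈ v :: l} ⊆ Metric.closedBall (cen v l) ((1 - 1 / M) * D) := by
    refine convexHull_min (fun u hu => ?_) (convex_closedBall _ _)
    rw [Metric.mem_closedBall, dist_comm, dist_eq_norm]
    have h1 := norm_sum_sub_le' (v :: l) u hu D fun x hx => h x hx u hu
    have hn : (0 : ℝ) < (l.length : ℝ) + 1 := by positivity
    have e1 : cen v l - u = ((l.length : ℝ) + 1)⁻¹ •
        ((v :: l).sum - ((v :: l).length : ℝ) • u) := by
      rw [cen, smul_sub, smul_smul, List.length_cons, Nat.cast_succ, List.sum_cons,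
        inv_mul_cancel₀ hn.ne', one_smul]
    rw [e1, norm_smul, norm_inv, Real.norm_of_nonneg hn.le]
    replace h1 := h1.trans_eq (b := ((v :: l).length - 1) * D) (c := l.length * D) (by simp)
    have hM' : (l.length : ℝ) + 1 ≤ M := by exact_mod_cast hM
    calc ((l.length : ℝ) + 1)⁻¹ * _ ≤ ((l.length : ℝ) + 1)⁻¹ * (l.length * D) := by gcongr
      _ = (1 - 1 / ((l.length : ℝ) + 1)) * D := by field_simp; ring
      _ ≤ (1 - 1 / M) * D := by gcongr
  exact this hw

open Classical in
/-- The barycenter as a point of the join.  The alternative `v` is never used for points of a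
common simplex. -/
def bary (v : joinK ι p e) (l : List (joinK ι p e)) : joinK ι p e :=
  if h : cen (v : ι → (Fin e → ZMod p) → ℝ) (l.map Subtype.val) ∈ joinK ι p e then ⟨_, h⟩ else v

lemma bary_act (h : Fin e → ZMod p) (v : joinK ι p e) (l : List (joinK ι p e)) :
    bary (act h v) (l.map (act h)) = act h (bary v l) := by
  have e1 : cen ((act h v : joinK ι p e) : ι → (Fin e → ZMod p) → ℝ)
      ((l.map (act h)).map Subtype.val) = shift h (cen v.1 (l.map Subtype.val)) := by
    have : (l.map (act h)).map Subtype.val = (l.map Subtype.val).map (shift h) := by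
      simp [Function.comp_def, act]
    rw [this, cen, cen, map_smul, map_add, map_list_sum, List.length_map, List.length_map]
    rfl
  unfold bary
  by_cases hK : cen (v : ι → (Fin e → ZMod p) → ℝ) (l.map Subtype.val) ∈ joinK ι p e
  · rw [dif_pos hK, dif_pos (by rw [e1]; exact shift_mem h hK)]
    exact Subtype.ext e1
  · rw [dif_neg hK, dif_neg (by rw [e1, shift_mem_iff]; exact hK)]

/-- The set of points of `l`, in the ambient vector space. -/
def vals (l : List (joinK ι p e)) : Set (ι → (Fin e → ZMod p) → ℝ) := {x | x ∈ l.map Subtype.val}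

lemma bary_mem {S : ι → (Fin e → ZMod p)} {v : joinK ι p e} {l : List (joinK ι p e)}
    (h : ∀ w ∈ v :: l, (w : ι → (Fin e → ZMod p) → ℝ) ∈ joinFace S) :
    (bary v l : ι → (Fin e → ZMod p) → ℝ) = cen v.1 (l.map Subtype.val) := by
  have : cen (v : ι → (Fin e → ZMod p) → ℝ) (l.map Subtype.val) ∈ joinK ι p e := by
    refine joinFace_subset S (convexHull_min ?_ (convex_joinFace S) (cen_mem_convexHull _ _))
    intro x hx
    rw [Set.mem_ofPred_eq, ← List.map_cons, List.mem_map] at hx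
    obtain ⟨w, hw, rfl⟩ := hx
    exact h w hw
  rw [bary, dif_pos this]

lemma sdn_bary_mem (M : ℕ) (S : ι → (Fin e → ZMod p)) (D : ℝ) (n : ℕ) (hn : n ≤ M)
    (l : List (joinK ι p e)) (hl : l.length = n)
    (hS : ∀ w ∈ l, (w : ι → (Fin e → ZMod p) → ℝ) ∈ joinFace S)
    (hD : ∀ v ∈ l, ∀ w ∈ l, dist v w ≤ D) :
    sdn bary n (Finsupp.single l 1) ∈ sup {l' : List (joinK ι p e) |
      (∀ w ∈ l', (w : ι → (Fin e → ZMod p) → ℝ) ∈ joinFace S) ∧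
      ∀ v ∈ l', ∀ w ∈ l', dist v w ≤ (1 - 1 / M) * D} := by
  let B : List (joinK ι p e) → List (joinK ι p e) → Prop := fun m l' =>
    m.length ≤ M → (∀ w ∈ m, (w : ι → (Fin e → ZMod p) → ℝ) ∈ joinFace S) →
    (∀ v ∈ m, ∀ w ∈ m, dist v w ≤ D) →
    (∀ w ∈ l', (w : ι → (Fin e → ZMod p) → ℝ) ∈ convexHull ℝ (vals m)) ∧
      ∀ v ∈ l', ∀ w ∈ l', dist v w ≤ (1 - 1 / M) * D
  have key := sdn_mem bary B (fun _ _ _ => by simp) ?_ n l hl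
  · refine sup_mono ?_ key
    rintro l' ⟨-, hB⟩
    obtain ⟨h1, h2⟩ := hB (hl.trans_le hn) hS hD
    refine ⟨fun w hw => convexHull_min ?_ (convex_joinFace S) (h1 w hw), h2⟩
    intro x hx
    obtain ⟨w, hw, rfl⟩ := List.mem_map.1 hx
    exact hS w hw
  · intro v l m l' hm hB hM hS hD
    obtain ⟨h1, h2⟩ := hB (hm.length_le.trans hM) (fun w hw => hS w (hm.subset hw))
      fun a ha b hb => hD a (hm.subset ha) b (hm.subset hb)
    have hb := bary_mem hS
    have h3 : ∀ w ∈ l', (w : ι → (Fin e → ZMod p) → ℝ) ∈ convexHull ℝ (vals (v :: l)) :=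
      fun w hw => convexHull_mono (fun x hx => List.map_subset _ hm.subset hx) (h1 w hw)
    have hv : vals (v :: l) = {x | x ∈ v.1 :: l.map Subtype.val} := by simp [vals]
    have h4 : (bary v l : ι → (Fin e → ZMod p) → ℝ) ∈ convexHull ℝ (vals (v :: l)) := by
      rw [hb, hv]; exact cen_mem_convexHull _ _
    have h5 : ∀ w ∈ bary v l :: l', dist w (bary v l) ≤ (1 - 1 / M) * D := by
      intro w hw
      rw [Subtype.dist_eq, hb]
      refine dist_cen_le _ _ D ?_ M (by simpa using hM) ?_
      · intro x hx y hy
        rw [← List.map_cons] at hx hy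
        obtain ⟨a, ha, rfl⟩ := List.mem_map.1 hx
        obtain ⟨b, hb, rfl⟩ := List.mem_map.1 hy
        exact hD a ha b hb
      · rw [← hv]
        rcases List.mem_cons.1 hw with rfl | hw
        · exact h4
        · exact h3 w hw
    refine ⟨fun w hw => ?_, fun x hx y hy => ?_⟩
    · rcases List.mem_cons.1 hw with rfl | hw
      · exact h4
      · exact h3 w hw
    · rcases List.mem_cons.1 hx with rfl | hx
      · rw [dist_comm]; exact h5 y hy
      · rcases List.mem_cons.1 hy with rfl | hy
        · exact h5 x (by simp [hx])
        · exact h2 x hx y hy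

lemma dist_le_one_of_joinFace {S : ι → (Fin e → ZMod p)} {x y : ι → (Fin e → ZMod p) → ℝ}
    (hx : x ∈ joinFace S) (hy : y ∈ joinFace S) : dist x y ≤ 1 := by
  have hle : ∀ z ∈ joinFace S, ∀ i g, z i g ≤ 1 := by
    intro z hz i g
    rw [← hz.2.1]
    exact (Finset.single_le_sum (f := z i) (fun g _ => hz.1 i g) (Finset.mem_univ g)).trans
      (Finset.single_le_sum (f := fun i => ∑ g, z i g)
        (fun i _ => Finset.sum_nonneg fun g _ => hz.1 i g) (Finset.mem_univ i))
  rw [dist_pi_le_iff zero_le_one]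
  intro i
  rw [dist_pi_le_iff zero_le_one]
  intro g
  rw [Real.dist_eq, abs_le]
  have := hle x hx i g
  have := hle y hy i g
  have := hx.1 i g
  have := hy.1 i g
  constructor <;> linarith

open Classical in
/-- A vertex of the join. -/
def vert (i : ι) (g : Fin e → ZMod p) : ι → (Fin e → ZMod p) → ℝ := Pi.single i (Pi.single g 1)

lemma vert_ne_zero {i j : ι} {g h : Fin e → ZMod p} (hne : vert i g j h ≠ 0) : j = i ∧ h = g := by
  classical
  unfold vert at hne
  by_cases hj : j = i
  · subst hj
    refine ⟨rfl, ?_⟩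
    by_contra hg
    exact hne (by simp [hg])
  · exact absurd (by simp [hj]) hne

lemma vert_mem_joinFace (i : ι) (g : Fin e → ZMod p) (S : ι → (Fin e → ZMod p)) (hS : S i = g) :
    vert i g ∈ joinFace S := by
  classical
  refine ⟨fun j h => ?_, ?_, fun j h hne => ?_⟩
  · unfold vert
    simp only [Pi.single_apply]
    split_ifs
    · simp only [Pi.single_apply]; split_ifs <;> simp
    · simp
  · unfold vert
    rw [Finset.sum_eq_single i, Finset.sum_eq_single g]
    · simp
    · intro h _ hh; simp [hh]
    · simp
    · intro j _ hj; simp [hj]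
    · simp
  · obtain ⟨rfl, rfl⟩ := vert_ne_zero hne
    exact hS.symm

lemma shift_vert (i : ι) (g h : Fin e → ZMod p) : shift h (vert i g) = vert i (g + h) := by
  classical
  funext j k
  rw [shift_apply]
  unfold vert
  by_cases hj : j = i
  · subst hj
    simp only [Pi.single_eq_same, Pi.single_apply, sub_eq_iff_eq_add]
  · simp [hj]

/-- The join carries systems of arbitrarily small simplices in degrees up to its dimension. -/
lemma exists_small_isSys [Nonempty ι] (ε : ℝ) (hε : 0 < ε) :
    ∃ c : (Fin e → ℤ) → Ch (joinK ι p e), IsSys p gen c ∧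
      ∀ μ, ∑ i, μ i < (Fintype.card ι : ℤ) → c μ ∈ sup {l : List (joinK ι p e) |
         ∀ v ∈ l, ∀ w ∈ l, dist v w < ε} := by
  classical
  set M := Fintype.card ι with hM
  have hMpos : 0 < M := Fintype.card_pos
  have key : ∀ k : ℕ, ∃ c : (Fin e → ℤ) → Ch (joinK ι p e), IsSys p gen c ∧
      ∀ μ, ∑ i, μ i < (M : ℤ) → c μ ∈ sup {l : List (joinK ι p e) | (∃ S : ι → (Fin e → ZMod p),
        ∀ w ∈ l, (w : ι → (Fin e → ZMod p) → ℝ) ∈ joinFace S) ∧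
        ∀ v ∈ l, ∀ w ∈ l, dist v w ≤ (1 - 1 / M : ℝ) ^ k} := by
    intro k
    induction k with
    | zero =>
      obtain ⟨c, hc, hsup⟩ := exists_isSys_join (e := e) p
      let ρ : ℕ → ι := fun n => (Fintype.equivFin ι).symm ⟨n % M, Nat.mod_lt _ hMpos⟩
      have hρ : ∀ m n, m < M → n < M → ρ m = ρ n → m = n := by
        intro m n hm hn h
        have := (Fintype.equivFin ι).symm.injective h
        simpa [Nat.mod_eq_of_lt hm, Nat.mod_eq_of_lt hn] using this
      let φ : ℕ × (Fin e → ZMod p) → joinK ι p e := fun a =>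
        ⟨vert (ρ a.1) a.2, joinFace_subset (fun _ => a.2) (vert_mem_joinFace _ _ _ rfl)⟩
      refine ⟨_, hc.push φ (T' := gen) fun i a => Subtype.ext ?_, fun μ hμ => ?_⟩
      · exact (shift_vert _ _ _).symm
      · refine push_mem_sup φ ?_ (hsup μ)
        rintro l ⟨hl1, hl2⟩
        have huniq : ∀ a ∈ l, ∀ b ∈ l, a.1 = b.1 → a = b := by
          intro a ha b hb
          refine @List.Pairwise.forall_of_forall _
            (fun a b : ℕ × (Fin e → ZMod p) => a.1 = b.1 → a = b) l
            ⟨fun a b h hab => (h hab.symm).symm⟩ (fun a _ _ => rfl) (hl1.imp ?_) a ha b hb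
          intro a b h h'
          omega
        have hS : ∃ S : ι → (Fin e → ZMod p), ∀ a ∈ l, S (ρ a.1) = a.2 := by
          refine ⟨fun i => if h : ∃ a ∈ l, ρ a.1 = i then h.choose.2 else 0, fun a ha => ?_⟩
          have h : ∃ b ∈ l, ρ b.1 = ρ a.1 := ⟨a, ha, rfl⟩
          beta_reduce
          rw [dif_pos h]
          obtain ⟨h1, h2⟩ := h.choose_spec
          have h3 := hl2 _ h1
          have h4 := hl2 _ ha
          rw [huniq _ h1 a ha (hρ _ _ (by omega) (by omega) h2)]
        obtain ⟨S, hS⟩ := hS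
        have hface : ∀ w ∈ l.map φ, (w : ι → (Fin e → ZMod p) → ℝ) ∈ joinFace S := by
          intro w hw
          obtain ⟨a, ha, rfl⟩ := List.mem_map.1 hw
          exact vert_mem_joinFace _ _ _ (hS a ha)
        refine ⟨⟨S, hface⟩, fun v hv w hw => ?_⟩
        rw [pow_zero]
        exact dist_le_one_of_joinFace (hface v hv) (hface w hw)
    | succ k ih =>
      obtain ⟨c, hc, hsup⟩ := ih
      refine ⟨_, hc.sdn bary fun i v l => bary_act _ _ _, fun μ hμ => ?_⟩
      have h1 : c μ ∈ sup ({l : List (joinK ι p e) | (l.length : ℤ) = (∑ i, μ i) + 1} ∩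
        {l : List (joinK ι p e) | (∃ S : ι → (Fin e → ZMod p),
        ∀ w ∈ l, (w : ι → (Fin e → ZMod p) → ℝ) ∈ joinFace S) ∧
        ∀ v ∈ l, ∀ w ∈ l, dist v w ≤ (1 - 1 / M : ℝ) ^ k}) := by
        rw [sup, Finsupp.supported_inter]
        exact ⟨hc.len μ, hsup μ hμ⟩
      refine mem_of_sup (WCT.sdn bary _) (fun l hl => ?_) h1
      obtain ⟨hl1, ⟨S, hS⟩, hD⟩ := hl
      rw [Set.mem_ofPred_eq] at hl1
      refine sup_mono ?_ (sdn_bary_mem M S _ _ (by omega) l (by omega) hS hD)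
      rintro l' ⟨h1, h2⟩
      refine ⟨⟨S, h1⟩, ?_⟩
      rwa [pow_succ']
  have hM1 : (1 : ℝ) ≤ M := by exact_mod_cast hMpos
  obtain ⟨k, hk⟩ := exists_pow_lt_of_lt_one hε (y := (1 - 1 / M : ℝ)) (by
    have : (0 : ℝ) < 1 / M := by positivity
    linarith)
  obtain ⟨c, hc, hsup⟩ := key k
  exact ⟨c, hc, fun μ hμ => sup_mono (fun l hl v hv w hw => (hl.2 v hv w hw).trans_lt hk)
    (hsup μ hμ)⟩

end Geometry

/-! ### A Borsuk–Ulam theorem for elementary abelian groups -/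

section BorsukUlam

variable {ι : Type*} [Fintype ι] {p e : ℕ} [NeZero p]

lemma isCompact_joinK : IsCompact (joinK ι p e) := by
  have hcl : IsClosed (joinK ι p e) := by
    have : joinK ι p e = {y | ∀ i g, 0 ≤ y i g} ∩ {y | ∑ i, ∑ g, y i g = 1} ∩
        {y | ∀ i g g', g ≠ g' → y i g * y i g' = 0} := by
      ext y
      constructor
      · rintro ⟨h1, h2, h3⟩
        refine ⟨⟨h1, h2⟩, fun i g g' hg => ?_⟩
        by_contra h
        exact hg (h3 i g g' (left_ne_zero_of_mul h) (right_ne_zero_of_mul h))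
      · rintro ⟨⟨h1, h2⟩, h3⟩
        refine ⟨h1, h2, fun i g g' h h' => ?_⟩
        by_contra hg
        exact mul_ne_zero h h' (h3 i g g' hg)
    rw [this]
    refine IsClosed.inter (IsClosed.inter ?_ ?_) ?_
    · simp only [Set.ofPred_forall]
      exact isClosed_iInter fun i => isClosed_iInter fun g =>
        isClosed_le continuous_const (by fun_prop)
    · exact isClosed_eq (by fun_prop) continuous_const
    · simp only [Set.ofPred_forall]
      exact isClosed_iInter fun i => isClosed_iInter fun g => isClosed_iInter fun g' =>
        isClosed_iInter fun _ => isClosed_eq (by fun_prop) continuous_const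
  refine IsCompact.of_isClosed_subset (isCompact_univ_pi fun i => isCompact_univ_pi fun g =>
    isCompact_Icc (a := (0 : ℝ)) (b := 1)) hcl ?_
  intro y hy i _ g _
  refine ⟨hy.1 i g, ?_⟩
  rw [← hy.2.1]
  exact (Finset.single_le_sum (f := y i) (fun g _ => hy.1 i g) (Finset.mem_univ g)).trans
    (Finset.single_le_sum (f := fun i => ∑ g, y i g)
      (fun i _ => Finset.sum_nonneg fun g _ => hy.1 i g) (Finset.mem_univ i))

/-- There is a (discontinuous) equivariant map from the join to the group. -/
lemma exists_column (ι : Type*) [Fintype ι] (p e : ℕ) [NeZero p] :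
    ∃ γ : joinK ι p e → (Fin e → ZMod p), ∀ h y, γ (act h y) = γ y + h := by
  classical
  -- the row depends only on the set of nonzero rows, hence is invariant
  have hrow : ∀ y : joinK ι p e, ∃ i g, y.1 i g ≠ 0 := by
    intro y
    by_contra! h
    have := y.2.2.1
    simp [h] at this
  have hι : Nonempty (joinK ι p e) → Nonempty ι := fun ⟨y⟩ => ⟨(hrow y).choose⟩
  by_cases hne : Nonempty ι
  · let row : joinK ι p e → ι := fun y => Classical.epsilon fun i => ∃ g, y.1 i g ≠ 0
    have hr : ∀ y : joinK ι p e, ∃ g, y.1 (row y) g ≠ 0 := fun y => Classical.epsilon_spec (hrow y)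
    choose γ hγ using hr
    refine ⟨γ, fun h y => ?_⟩
    have hinv : row (act h y) = row y := by
      simp only [row]
      congr 1
      funext i
      apply propext
      constructor
      · rintro ⟨g, hg⟩; exact ⟨g - h, hg⟩
      · rintro ⟨g, hg⟩
        refine ⟨g + h, ?_⟩
        show y.1 i (g + h - h) ≠ 0
        rwa [add_sub_cancel_right]
    have h1 : y.1 (row y) (γ (act h y) - h) ≠ 0 := by
      have := hγ (act h y)
      rw [hinv] at this
      exact this
    exact sub_eq_iff_eq_add.1 (y.2.2.2 _ _ _ h1 (hγ y))
  · exact ⟨fun _ => 0, fun h y => absurd (hι ⟨y⟩) hne⟩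

lemma arg_stdAddChar_mul (a : ZMod p) (z : ℂ) (hz : z ≠ 0) :
    ∃ n : ℤ, (ZMod.stdAddChar a * z).arg / (2 * Real.pi) =
      z.arg / (2 * Real.pi) + (a.val : ℝ) / p + n := by
  have hp : (p : ℝ) ≠ 0 := by exact_mod_cast NeZero.ne p
  have e1 : ZMod.stdAddChar a = Complex.exp (((2 * Real.pi * a.val / p : ℝ) : ℂ) * Complex.I) := by
    have := ZMod.stdAddChar_coe (N := p) (a.val : ℤ)
    rw [Int.cast_natCast, ZMod.natCast_zmod_val] at this
    rw [this]
    congr 1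
    push_cast
    ring
  have h1 : (((ZMod.stdAddChar a * z).arg : ℝ) : Real.Angle) =
      ((2 * Real.pi * a.val / p + z.arg : ℝ) : Real.Angle) := by
    rw [Complex.arg_mul_coe_angle (by rw [e1]; exact Complex.exp_ne_zero _) hz, e1,
      Complex.exp_mul_I, ← Complex.ofReal_cos, ← Complex.ofReal_sin, ← Real.Angle.cos_coe,
      ← Real.Angle.sin_coe, Complex.arg_cos_add_sin_mul_I_coe_angle, Real.Angle.coe_add]
  obtain ⟨n, hn⟩ := Real.Angle.angle_eq_iff_two_pi_dvd_sub.1 h1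
  refine ⟨n, ?_⟩
  have hpi := Real.pi_ne_zero
  rw [sub_eq_iff_eq_add.1 hn]
  field_simp
  ring

lemma val_add_div (x a : ZMod p) :
    ∃ n : ℤ, (((x + a).val : ℝ)) / p = (x.val : ℝ) / p + (a.val : ℝ) / p + n := by
  have hp : (p : ℝ) ≠ 0 := by exact_mod_cast NeZero.ne p
  have : (p : ℤ) ∣ (x + a).val - x.val - a.val := by
    rw [← ZMod.intCast_zmod_eq_zero_iff_dvd]
    push_cast
    simp
  obtain ⟨n, hn⟩ := this
  refine ⟨n, ?_⟩
  have h2 : ((x + a).val : ℝ) - x.val - a.val = p * n := by exact_mod_cast hn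
  field_simp
  linarith

/-- The winding cocycle vanishes on a triangle whose angles lie, modulo full turns, within a quarter
turn of a common value `x`. -/
lemma om_eq_zero_of_close {V : Type*} (s t : V → ℝ) (x : ℝ) (a b c : V)
    (h : ∀ v ∈ [a, b, c], |t v| < 1 / 4 ∧ ∃ n : ℤ, s v = x + t v + n) : om s a b c = 0 := by
  obtain ⟨ha, na, hna⟩ := h a (by simp)
  obtain ⟨hb, nb, hnb⟩ := h b (by simp)
  obtain ⟨hc, nc, hnc⟩ := h c (by simp)
  have key : ∀ (y z : ℝ) (m n : ℤ), |y| < 1 / 4 → |z| < 1 / 4 →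
      round ((x + y + m) - (x + z + n)) = m - n := by
    intro y z m n hy hz
    have : (x + y + m) - (x + z + n) = (y - z) + ((m - n : ℤ) : ℝ) := by push_cast; ring
    rw [this, round_add_intCast]
    rw [abs_lt] at hy hz
    have : round (y - z) = 0 := round_eq_zero_iff.2 ⟨by linarith, by linarith⟩
    omega
  unfold om
  rw [hna, hnb, hnc, key _ _ _ _ hc ha, key _ _ _ _ hb ha, key _ _ _ _ hc hb]
  ring

lemma arg_close (z w : ℂ) (h : ‖w - z‖ < ‖z‖) :
    |(w / z).arg / (2 * Real.pi)| < 1 / 4 ∧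
      ∃ n : ℤ, w.arg / (2 * Real.pi) =
        z.arg / (2 * Real.pi) + (w / z).arg / (2 * Real.pi) + n := by
  have hz : z ≠ 0 := by
    rintro rfl
    simp at h
    exact absurd h (not_lt.2 (norm_nonneg w))
  have hw : w ≠ 0 := by rintro rfl; simp at h
  have hpi := Real.pi_pos
  constructor
  · have h1 : ‖w / z - 1‖ < 1 := by
      have : w / z - 1 = (w - z) / z := by field_simp
      rw [this, norm_div, div_lt_one (norm_pos_iff.2 hz)]
      exact h
    have h2 : 0 < (w / z).re := by
      have := (abs_le.1 (Complex.abs_re_le_norm (w / z - 1))).1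
      rw [Complex.sub_re, Complex.one_re] at this
      linarith
    have h3 := Complex.abs_arg_lt_pi_div_two_iff.2 (Or.inl h2)
    rw [abs_div, abs_of_pos (by positivity : 0 < 2 * Real.pi), div_lt_iff₀ (by positivity)]
    linarith
  · have h1 : ((w.arg : ℝ) : Real.Angle) = ((z.arg + (w / z).arg : ℝ) : Real.Angle) := by
      rw [Real.Angle.coe_add, ← Complex.arg_mul_coe_angle hz (div_ne_zero hw hz),
        mul_div_cancel₀ _ hz]
    obtain ⟨n, hn⟩ := Real.Angle.angle_eq_iff_two_pi_dvd_sub.1 h1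
    refine ⟨n, ?_⟩
    rw [sub_eq_iff_eq_add.1 hn]
    field_simp
    ring

/-- A Borsuk–Ulam theorem: an equivariant continuous map from the join to a sum of `card κ`
nontrivial complex characters of `(ℤ/p)^e` has a zero, if the dimension of the join is at least
`2 card κ`. -/
theorem exists_zero_of_equivariant (hp : p.Prime) {κ : Type*} [Fintype κ]
    (hcard : 2 * Fintype.card κ < Fintype.card ι) (α : κ → Fin e → ZMod p) (hα : ∀ k, α k ≠ 0)
    (F : joinK ι p e → κ → ℂ) (hF : Continuous F)
    (hequiv : ∀ i y k, F (gen i y) k = ZMod.stdAddChar (α k i) * F y k) :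
    ∃ y, ∀ k, F y k = 0 := by
  classical
  by_contra! hne
  have hι : Nonempty ι := Fintype.card_pos_iff.1 (by omega)
  have : CompactSpace (joinK ι p e) := isCompact_iff_compactSpace.1 isCompact_joinK
  obtain ⟨v₀⟩ : Nonempty (joinK ι p e) :=
    ⟨⟨vert (Classical.arbitrary ι) 0, joinFace_subset (fun _ => 0) (vert_mem_joinFace _ _ _ rfl)⟩⟩
  obtain ⟨v₁, hv₁⟩ : ∃ v₁, ∀ v, ‖F v₁‖ ≤ ‖F v‖ := by
    obtain ⟨v₁, -, h⟩ := isCompact_univ.exists_isMinOn ⟨v₀, Set.mem_univ v₀⟩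
      (f := fun v => ‖F v‖) hF.norm.continuousOn
    exact ⟨v₁, fun v => h (Set.mem_univ v)⟩
  set δ := ‖F v₁‖ with hδ
  have hδpos : 0 < δ := by
    rw [hδ, norm_pos_iff]
    intro h0
    obtain ⟨k, hk⟩ := hne v₁
    exact hk (by rw [h0]; rfl)
  obtain ⟨ε, hε, hunif⟩ := Metric.uniformContinuous_iff.1
    (CompactSpace.uniformContinuous_of_continuous hF) δ hδpos
  obtain ⟨c, hc, hsmall⟩ := exists_small_isSys (ι := ι) (p := p) (e := e) ε hε
  obtain ⟨γ, hγ⟩ := exists_column ι p e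
  -- the angle of the `k`-th component, extended equivariantly to its zero set
  let s : κ → joinK ι p e → ℝ := fun k v =>
    if F v k = 0 then ((∑ i, α k i * γ v i : ZMod p).val : ℝ) / p
    else (F v k).arg / (2 * Real.pi)
  have hs : ∀ k i v, ∃ n : ℤ, s k (gen i v) = s k v + ((α k i).val : ℝ) / p + n := by
    intro k i v
    simp only [s]
    have hχ : ZMod.stdAddChar (α k i) ≠ 0 := by
      have := (ZMod.stdAddChar (N := p)).val_isUnit (α k i)
      exact this.ne_zero
    by_cases h0 : F v k = 0
    · rw [if_pos (by rw [hequiv, h0, mul_zero]), if_pos h0]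
      have : ∑ j, α k j * γ (gen i v) j = (∑ j, α k j * γ v j) + α k i := by
        rw [gen, hγ]
        simp [mul_add, Finset.sum_add_distrib, Pi.single_apply]
      rw [this]
      exact val_add_div _ _
    · rw [if_neg (by rw [hequiv]; exact mul_ne_zero hχ h0), if_neg h0, hequiv]
      exact arg_stdAddChar_mul _ _ h0
  let L : List ((joinK ι p e → ℝ) × (Fin e → ℤ)) :=
    (Finset.univ : Finset κ).toList.map fun k => (s k, fun i => ((α k i).val : ℤ))
  obtain ⟨μ, hμ, hOm⟩ := hc.exists_Om_ne_zero hp gen_iterate gen_comm v₀ L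
    (by
      intro x hx i v
      obtain ⟨k, -, rfl⟩ := List.mem_map.1 hx
      simpa using hs k i v)
    (by
      intro x hx
      obtain ⟨k, -, rfl⟩ := List.mem_map.1 hx
      obtain ⟨i, hi⟩ := Function.ne_iff.1 (hα k)
      exact ⟨i, by simpa using hi⟩)
  apply hOm
  have hL : L.length = Fintype.card κ := by simp [L]
  refine eq_of_sup (f := Om (L.map Prod.fst)) (g := 0) (fun l hl => ?_)
    (hsmall μ (by rw [hμ, hL]; exact_mod_cast hcard))
  rw [Set.mem_ofPred_eq] at hl
  have hmem : ∀ k, s k ∈ L.map Prod.fst := fun k => by simp [L]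
  refine Om_eq_zero _ l ?_
  cases l with
  | nil => exact ⟨s (hne v₀).choose, hmem _, by simp⟩
  | cons v l =>
    obtain ⟨k, hk⟩ : ∃ k, δ ≤ ‖F v k‖ := by
      by_contra! h
      exact absurd ((pi_norm_lt_iff hδpos).2 h) (not_lt.2 (hv₁ v))
    refine ⟨s k, hmem k, fun a ha b hb c hc => ?_⟩
    refine om_eq_zero_of_close (s k) (fun w => (F w k / F v k).arg / (2 * Real.pi))
      ((F v k).arg / (2 * Real.pi)) a b c ?_
    intro w hw
    have hw' : w ∈ v :: l := by
      simp only [List.mem_cons, List.not_mem_nil, or_false] at hw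
      rcases hw with rfl | rfl | rfl <;> assumption
    have hclose : ‖F w k - F v k‖ < ‖F v k‖ := by
      refine lt_of_lt_of_le ?_ hk
      rw [← dist_eq_norm]
      exact (dist_le_pi_dist (F w) (F v) k).trans_lt (hunif (hl w hw' v (by simp)))
    have h0 : F w k ≠ 0 := by
      intro h0; rw [h0] at hclose; simp at hclose
    have := arg_close (F v k) (F w k) hclose
    simpa only [s, if_neg h0] using this

end BorsukUlam

/-! ### The topological Tverberg theorem for prime powers -/

section Tverberg

variable {p e : ℕ} [NeZero p]

/-- The standard bicharacter of `(ℤ/p)^e`. -/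
def chi (α g : Fin e → ZMod p) : ℂ := ZMod.stdAddChar (∑ i, α i * g i)

lemma chi_add_right (α g h : Fin e → ZMod p) : chi α (g + h) = chi α g * chi α h := by
  simp [chi, mul_add, Finset.sum_add_distrib, AddChar.map_add_eq_mul]

lemma sum_chi [DecidableEq (Fin e → ZMod p)] (t : Fin e → ZMod p) :
    ∑ α : Fin e → ZMod p, chi α t = if t = 0 then (p ^ e : ℂ) else 0 := by
  split_ifs with h
  · subst h; simp [chi, ZMod.card]
  · obtain ⟨i, hi⟩ := Function.ne_iff.1 h
    let φ : (Fin e → ZMod p) →+ ZMod p :=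
      { toFun := fun α => ∑ i, α i * t i
        map_zero' := by simp
        map_add' := fun a b => by simp [add_mul, Finset.sum_add_distrib] }
    have hψ : (ZMod.stdAddChar (N := p)).compAddMonoidHom φ ≠ 0 := by
      intro h0
      have h1 := DFunLike.congr_fun h0 (Pi.single i 1)
      have h2 : φ (Pi.single i 1) = t i := by simp [φ, Pi.single_apply]
      rw [AddChar.compAddMonoidHom_apply, h2, AddChar.zero_apply,
        ← AddChar.map_zero_eq_one (ZMod.stdAddChar (N := p))] at h1
      exact hi (ZMod.injective_stdAddChar h1)
    exact AddChar.sum_eq_zero_iff_ne_zero.2 hψ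

/-- A function all of whose nontrivial Fourier coefficients vanish is constant. -/
lemma const_of_fourier (U : (Fin e → ZMod p) → ℂ)
    (hU : ∀ α : Fin e → ZMod p, α ≠ 0 → ∑ g, chi α g * U g = 0) (g h : Fin e → ZMod p) :
    U g = U h := by
  classical
  have key : ∀ h, (p ^ e : ℂ) * U h = ∑ g, U g := by
    intro h
    have e1 : ∑ α : Fin e → ZMod p, chi α (-h) * ∑ g, chi α g * U g = ∑ g, U g := by
      rw [Finset.sum_eq_single 0]
      · simp [chi]
      · intro α _ hα; rw [hU α hα, mul_zero]
      · simp
    rw [← e1]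
    simp only [Finset.mul_sum]
    rw [Finset.sum_comm]
    have e2 : ∀ g, ∑ α : Fin e → ZMod p, chi α (-h) * (chi α g * U g) =
        (if g = h then (p ^ e : ℂ) else 0) * U g := by
      intro g
      have := sum_chi (-h + g)
      simp only [neg_add_eq_zero, eq_comm (a := h)] at this
      rw [← this, Finset.sum_mul]
      exact Finset.sum_congr rfl fun α _ => by rw [chi_add_right, mul_assoc]
    rw [Finset.sum_congr rfl fun g _ => e2 g]
    simp
  have hne : (p ^ e : ℂ) ≠ 0 := pow_ne_zero _ (by exact_mod_cast NeZero.ne p)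
  exact mul_left_cancel₀ hne ((key g).trans (key h).symm)

variable {A : Type*} [Fintype A]

open Classical in
/-- A continuous map of the nonnegative orthant to the standard simplex, which rescales points of
total mass at least `c`. -/
def retr (a₀ : A) (c : ℝ) (x : A → ℝ) : A → ℝ :=
  (max (∑ a, x a) c)⁻¹ • (x + max (c - ∑ a, x a) 0 • Pi.single a₀ 1)

lemma retr_mem (a₀ : A) {c : ℝ} (hc : 0 < c) {x : A → ℝ} (hx : ∀ a, 0 ≤ x a) :
    retr a₀ c x ∈ stdSimplex ℝ A := by
  classical
  have hpos : 0 < max (∑ a, x a) c := lt_max_of_lt_right hc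
  constructor
  · intro a
    have h1 : (0 : ℝ) ≤ (Pi.single a₀ 1 : A → ℝ) a := by
      rw [Pi.single_apply]; split_ifs <;> simp
    have h2 := hx a
    have h3 : 0 ≤ max (c - ∑ a, x a) 0 := le_max_right _ _
    simp only [retr, Pi.smul_apply, Pi.add_apply, smul_eq_mul]
    convert mul_nonneg (inv_nonneg.2 hpos.le) (add_nonneg h2 (mul_nonneg h3 h1))
  · have : ∑ a, retr a₀ c x a = (max (∑ a, x a) c)⁻¹ * (∑ a, x a + max (c - ∑ a, x a) 0) := by
      simp only [retr, Pi.smul_apply, Pi.add_apply, smul_eq_mul, ← Finset.mul_sum,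
        Finset.sum_add_distrib]
      simp [Pi.single_apply]
    rw [this, ← max_add_add_left]
    simp only [add_sub_cancel, add_zero]
    rw [max_comm c, inv_mul_cancel₀ hpos.ne']

lemma continuous_retr (a₀ : A) {c : ℝ} (hc : 0 < c) : Continuous (retr a₀ c) := by
  classical
  have h1 : Continuous fun x : A → ℝ => (max (∑ a, x a) c)⁻¹ :=
    Continuous.inv₀ (by fun_prop) fun x => (lt_max_of_lt_right hc).ne'
  have h2 : Continuous fun x : A → ℝ =>
      x + max (c - ∑ a, x a) 0 • (Pi.single a₀ 1 : A → ℝ) := by fun_prop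
  exact h1.smul h2

lemma retr_apply_ne_zero (a₀ : A) {c : ℝ} {x : A → ℝ} (h : c ≤ ∑ a, x a) {a : A}
    (ha : retr a₀ c x a ≠ 0) : x a ≠ 0 := by
  intro h0
  apply ha
  simp [retr, max_eq_right (sub_nonpos.2 h), h0]

/-- The topological Tverberg theorem for prime powers, with `(ℤ/p)^e` as index set. -/
theorem topological_tverberg (hp : p.Prime) {J : Type*} [Fintype J]
    (hA : Fintype.card A = (p ^ e - 1) * (Fintype.card J + 1) + 1)
    (f : (A → ℝ) → J → ℝ) (hf : ContinuousOn f (stdSimplex ℝ A)) :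
    ∃ x : (Fin e → ZMod p) → A → ℝ, (∀ g, x g ∈ stdSimplex ℝ A) ∧
      (∀ g g' a, x g a ≠ 0 → x g' a ≠ 0 → g = g') ∧ ∀ g g', f (x g) = f (x g') := by
  classical
  obtain ⟨a₀⟩ : Nonempty A := Fintype.card_pos_iff.1 (by omega)
  have hrpos : (0 : ℝ) < (p : ℝ) ^ e := by
    have : 0 < p := hp.pos
    positivity
  set c : ℝ := 1 / (2 * (p : ℝ) ^ e) with hc
  have hcpos : 0 < c := by positivity
  -- the two copies of `A` supply the real and imaginary parts
  let X : Bool → (Fin e → ZMod p) → joinK (Bool × A) p e → A → ℝ := fun h g y a => y.1 (h, a) g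
  have hXnn : ∀ h g y a, 0 ≤ X h g y a := fun h g y a => y.2.1 _ _
  have hXc : ∀ h g, Continuous (X h g) := by
    intro h g
    refine continuous_pi fun a => ?_
    have : Continuous fun z : Bool × A → (Fin e → ZMod p) → ℝ => z (h, a) g := by fun_prop
    exact this.comp continuous_subtype_val
  let u : Bool → (Fin e → ZMod p) → Option J → joinK (Bool × A) p e → ℝ := fun h g j y =>
    match j with
    | none => ∑ a, X h g y a
    | some j => f (retr a₀ c (X h g y)) j
  have huc : ∀ h g j, Continuous (u h g j) := by
    intro h g j
    match j with
    | none => exact continuous_finsetSum _ fun a _ => (continuous_apply a).comp (hXc h g)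
    | some j =>
      refine (continuous_apply j).comp (hf.comp_continuous
        ((continuous_retr a₀ hcpos).comp (hXc h g)) fun y => retr_mem a₀ hcpos (hXnn h g y))
  have hXg : ∀ h g i y, X h g (gen i y) = X h (g - Pi.single i 1) y := fun h g i y => rfl
  have hug : ∀ h g j i y, u h g j (gen i y) = u h (g - Pi.single i 1) j y := by
    intro h g j i y
    cases j <;> simp only [u, hXg]
  let U : (Fin e → ZMod p) → Option J → joinK (Bool × A) p e → ℂ := fun g j y =>
    (u false g j y : ℂ) + (u true g j y : ℂ) * Complex.I
  let κ := {α : Fin e → ZMod p // α ≠ 0} × Option J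
  have hκ : Fintype.card κ = (p ^ e - 1) * (Fintype.card J + 1) := by
    have : Fintype.card {α : Fin e → ZMod p // α ≠ 0} = p ^ e - 1 := by
      rw [Fintype.card_subtype_compl]
      simp [ZMod.card]
    rw [Fintype.card_prod, this, Fintype.card_option]
  obtain ⟨y, hy⟩ := exists_zero_of_equivariant (ι := Bool × A) (κ := κ) hp
    (by rw [hκ, Fintype.card_prod, Fintype.card_bool, hA]; omega)
    (fun k => k.1.1) (fun k => k.1.2) (fun y k => ∑ g, chi k.1.1 g * U g k.2 y)
    (by
      refine continuous_pi fun k => continuous_finsetSum _ fun g _ => continuous_const.mul ?_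
      exact (Complex.continuous_ofReal.comp (huc _ _ _)).add
        ((Complex.continuous_ofReal.comp (huc _ _ _)).mul continuous_const))
    (by
      intro i y k
      rw [Finset.mul_sum, ← Equiv.sum_comp (Equiv.addRight (Pi.single i (1 : ZMod p)))]
      refine Finset.sum_congr rfl fun g _ => ?_
      have e1 : U (g + Pi.single i 1) k.2 (gen i y) = U g k.2 y := by
        simp only [U, hug, add_sub_cancel_right]
      have e2 : chi k.1.1 (Pi.single i 1) = ZMod.stdAddChar (k.1.1 i) := by
        simp [chi, Pi.single_apply]
      rw [Equiv.coe_addRight, e1, chi_add_right, e2]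
      ring)
  have hconst : ∀ h g g' j, u h g j y = u h g' j y := by
    intro h g g' j
    have := const_of_fourier (fun g => U g j y) (fun α hα => hy (⟨α, hα⟩, j)) g g'
    have hre := congrArg Complex.re this
    have him := congrArg Complex.im this
    simp [U] at hre him
    cases h
    · exact hre
    · exact him
  obtain ⟨h, hh⟩ : ∃ h, ∀ g, c ≤ ∑ a, X h g y a := by
    by_contra! hcon
    obtain ⟨g₀, h0⟩ := hcon false
    obtain ⟨g₁, h1⟩ := hcon true
    have hsum : ∑ g, (∑ a, X false g y a + ∑ a, X true g y a) = 1 := by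
      rw [← y.2.2.1, Fintype.sum_prod_type, Fintype.sum_bool, Finset.sum_add_distrib, add_comm,
        Finset.sum_comm, Finset.sum_comm (f := fun g a => X false g y a)]
    have hle : ∀ g, ∑ a, X false g y a + ∑ a, X true g y a =
        ∑ a, X false g₀ y a + ∑ a, X true g₁ y a := by
      intro g
      have h2 := hconst false g g₀ none
      have h3 := hconst true g g₁ none
      simp only [u] at h2 h3
      rw [h2, h3]
    rw [Finset.sum_congr rfl fun g _ => hle g, Finset.sum_const, Finset.card_univ, nsmul_eq_mul]
      at hsum
    have hcardG : (Fintype.card (Fin e → ZMod p) : ℝ) = (p : ℝ) ^ e := by simp [ZMod.card]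
    rw [hcardG] at hsum
    have : (p : ℝ) ^ e * (∑ a, X false g₀ y a + ∑ a, X true g₁ y a) < (p : ℝ) ^ e * (c + c) := by
      gcongr
    rw [hsum, hc] at this
    field_simp at this
    linarith
  refine ⟨fun g => retr a₀ c (X h g y), fun g => retr_mem a₀ hcpos (hXnn h g y), ?_, ?_⟩
  · intro g g' a h1 h2
    exact y.2.2.2 (h, a) g g' (retr_apply_ne_zero a₀ (hh g) h1) (retr_apply_ne_zero a₀ (hh g') h2)
  · intro g g'
    funext j
    exact hconst h g g' (some j)

end Tverberg

end WCT

/-- The topological weak colored Tverberg theorem. -/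
theorem topological_weak_colored_tverberg
    (d p ee : ℕ) (hp : p.Prime) (hd : 1 ≤ d)
    (r N : ℕ) (hr : r = p ^ ee)
    (hN : N = (r - 1) * (2 * d + 2))
    (C : Fin (d + 1) → Finset (Fin (N + 1)))
    (hCdisj : ∀ i i' : Fin (d + 1), i ≠ i' → Disjoint (C i) (C i'))
    (hCcover : ∀ v : Fin (N + 1), ∃ i, v ∈ C i)
    (hCcard : ∀ i, (C i).card ≤ 2 * r - 1)
    (f : EuclideanSpace ℝ (Fin (N + 1)) → EuclideanSpace ℝ (Fin d))
    (hf : ContinuousOn f (stdSimp N)) :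
    ∃ σ : Fin r → Finset (Fin (N + 1)),
      (∀ j, (σ j).Nonempty) ∧
      (∀ j j', j ≠ j' → Disjoint (σ j) (σ j')) ∧
      (∀ j, ∀ i : Fin (d + 1), (σ j ∩ C i).card ≤ 1) ∧
      (⋂ j, f '' simpFace N (σ j)).Nonempty := by
  have : NeZero p := ⟨hp.ne_zero⟩
  have hrpos : 0 < r := hr ▸ pow_pos hp.pos _
  -- `pen i x` vanishes at a point of the simplex iff its support meets `C i` at most once
  let pen : Fin (d + 1) → (Fin (N + 1) → ℝ) → ℝ := fun i x =>
    ∑ u ∈ C i, ∑ v ∈ (C i).erase u, x u * x v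
  let F : (Fin (N + 1) → ℝ) → Fin d ⊕ Fin (d + 1) → ℝ := fun x =>
    Sum.elim (fun j => f (WithLp.toLp 2 x) j) (fun i => pen i x)
  have hmem : ∀ x ∈ stdSimplex ℝ (Fin (N + 1)), WithLp.toLp 2 x ∈ stdSimp N := fun x hx => hx
  have hF : ContinuousOn F (stdSimplex ℝ (Fin (N + 1))) := by
    refine continuousOn_pi.2 fun j => ?_
    rcases j with j | i
    · have h1 : ContinuousOn (fun x : Fin (N + 1) → ℝ => f (WithLp.toLp 2 x))
          (stdSimplex ℝ (Fin (N + 1))) :=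
        hf.comp (PiLp.continuous_toLp 2 _).continuousOn hmem
      have h2 : Continuous fun z : EuclideanSpace ℝ (Fin d) => z j := by fun_prop
      exact h2.comp_continuousOn h1
    · have : Continuous (pen i) := by fun_prop
      exact this.continuousOn
  obtain ⟨x, hx, hdisj, heq⟩ := WCT.topological_tverberg (p := p) (e := ee) hp
    (by simp only [Fintype.card_fin, Fintype.card_sum, hN, hr]; congr 2; ring) F hF
  have hcardG : Fintype.card (Fin ee → ZMod p) = r := by simp [ZMod.card, hr]
  let ψ : Fin r ≃ (Fin ee → ZMod p) := (Fintype.equivFinOfCardEq hcardG).symm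
  let σ : (Fin ee → ZMod p) → Finset (Fin (N + 1)) := fun g => Finset.univ.filter fun a => x g a ≠ 0
  have hσ : ∀ g a, a ∈ σ g ↔ x g a ≠ 0 := fun g a => by simp [σ]
  have hσd : ∀ g g', g ≠ g' → Disjoint (σ g) (σ g') := fun g g' hne =>
    Finset.disjoint_left.2 fun a h h' => hne (hdisj g g' a ((hσ g a).1 h) ((hσ g' a).1 h'))
  have hpen : ∀ i g, pen i (x g) = 0 ↔ (σ g ∩ C i).card ≤ 1 := by
    intro i g
    have hnn : ∀ u v, 0 ≤ x g u * x g v := fun u v => mul_nonneg ((hx g).1 u) ((hx g).1 v)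
    rw [Finset.card_le_one, Finset.sum_eq_zero_iff_of_nonneg fun u _ =>
      Finset.sum_nonneg fun v _ => hnn u v]
    constructor
    · intro h u hu v hv
      rw [Finset.mem_inter, hσ] at hu hv
      by_contra hne
      have h1 := (Finset.sum_eq_zero_iff_of_nonneg fun v _ => hnn u v).1 (h u hu.2) v
        (Finset.mem_erase.2 ⟨Ne.symm hne, hv.2⟩)
      exact mul_ne_zero hu.1 hv.1 h1
    · intro h u hu
      refine Finset.sum_eq_zero fun v hv => ?_
      rw [Finset.mem_erase] at hv
      by_contra hne
      rw [mul_eq_zero, not_or] at hne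
      exact hv.1 (h v (Finset.mem_inter.2 ⟨(hσ g v).2 hne.2, hv.2⟩) u
        (Finset.mem_inter.2 ⟨(hσ g u).2 hne.1, hu⟩))
  have hrain : ∀ g i, (σ g ∩ C i).card ≤ 1 := by
    intro g i
    -- pigeonhole: `r` disjoint supports cannot all meet a set of fewer than `2 r` points twice
    obtain ⟨g', hg'⟩ : ∃ g', (σ g' ∩ C i).card ≤ 1 := by
      by_contra! hcon
      have h1 : ∑ g, (σ g ∩ C i).card ≤ (C i).card := by
        rw [← Finset.card_biUnion fun g _ g' _ hne =>
          (hσd g g' hne).mono Finset.inter_subset_left Finset.inter_subset_left]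
        exact Finset.card_le_card (Finset.biUnion_subset.2 fun g _ => Finset.inter_subset_right)
      have h2 : ∑ _g : Fin ee → ZMod p, 2 ≤ ∑ g, (σ g ∩ C i).card :=
        Finset.sum_le_sum fun g _ => hcon g
      rw [Finset.sum_const, Finset.card_univ, hcardG, smul_eq_mul] at h2
      have := hCcard i
      omega
    rw [← hpen] at hg' ⊢
    rw [← hg']
    exact congrFun (heq g g') (Sum.inr i)
  refine ⟨fun j => σ (ψ j), fun j => ?_, fun j j' hne => hσd _ _ (ψ.injective.ne hne),
    fun j i => hrain _ i, f (WithLp.toLp 2 (x 0)), Set.mem_iInter.2 fun j =>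
      ⟨WithLp.toLp 2 (x (ψ j)), ⟨hmem _ (hx _), fun a ha => (hσ _ a).2 ha⟩, ?_⟩⟩
  · by_contra hemp
    rw [Finset.not_nonempty_iff_eq_empty] at hemp
    have h1 : ∑ a, x (ψ j) a = 0 := Finset.sum_eq_zero fun a _ => by
      by_contra h
      simpa [hemp] using (hσ (ψ j) a).2 h
    have := (hx (ψ j)).2
    linarith
  · ext k
    exact congrFun (heq (ψ j) 0) (Sum.inl k)
end
end

section
/- Let r ≥ 1, d ≥ 1 and m ≥ 0 be integers, set k = ⌈((r−1)/r)·d⌉, and let V be a finite set with |V| = (r−1)(d+2−m)+1. Then for every family S_1, …, S_r of pairwise disjoint subsets of V there is at least one index j with |S_j| ≤ k+1. Equivalently, among any r pairwise disjoint faces of the simplex Δ_N with N = (r−1)(d+2−m), at least one face lies in the k-skeleton of Δ_N; in particular, the k-skeleton of Δ_N is Tverberg unavoidable with respect to every continuous map Δ_N → ℝ^d. -/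
/-!
If every `S j` had at least `k + 2` elements, disjointness would give `r (k + 2) ≤ |V|`.
Since `r k ≥ (r - 1) d` by the choice of `k`, the left side is at least `(r - 1) d + 2 r`, while
`|V| ≤ (r - 1) (d + 2) + 1 = (r - 1) d + 2 r - 1` because `m ≥ 0`: a contradiction.
-/

open scoped BigOperators

/-- The pigeonhole lemma behind Tverberg unavoidability of the `k`-skeleton:
among `r` pairwise disjoint subsets of a set `V` with `|V| = (r−1)(d+2−m)+1`,
at least one has at most `k+1 = ⌈((r−1)/r)·d⌉ + 1` elements. -/
theorem skeleton_unavoidable_pigeonhole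
    {α : Type*} [DecidableEq α]
    (r d m : ℕ) (hr : 1 ≤ r) (hd : 1 ≤ d)
    (k : ℕ) (hk : k = ⌈(((r : ℚ) - 1) / (r : ℚ)) * d⌉₊)
    (V : Finset α) (hV : (V.card : ℤ) = ((r : ℤ) - 1) * ((d : ℤ) + 2 - (m : ℤ)) + 1)
    (S : Fin r → Finset α) (hSV : ∀ j, S j ⊆ V)
    (hdisj : ∀ j j', j ≠ j' → Disjoint (S j) (S j')) :
    ∃ j, (S j).card ≤ k + 1 := by
  by_contra! hlarge
  have hr0 : (0 : ℚ) < r := by exact_mod_cast hr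
  -- The defining property of the ceiling, cleared of denominators.
  have hk_ceil : ((r : ℤ) - 1) * d ≤ r * k := by
    have h : ((r : ℚ) - 1) / r * d ≤ k := hk ▸ Nat.le_ceil _
    rw [div_mul_eq_mul_div, div_le_iff₀ hr0, mul_comm (k : ℚ)] at h
    exact_mod_cast h
  have hsum : ∑ j, (S j).card ≤ V.card := by
    rw [← Finset.card_biUnion fun j _ j' _ hne => hdisj j j' hne]
    exact Finset.card_le_card (Finset.biUnion_subset.2 fun j _ => hSV j)
  have hlower : r * (k + 2) ≤ ∑ j, (S j).card := by
    simpa using Finset.card_nsmul_le_sum Finset.univ (fun j => (S j).card) (k + 2)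
      fun j _ => hlarge j
  have hcard : (r : ℤ) * (k + 2) ≤ V.card := by exact_mod_cast hlower.trans hsum
  have hm : 0 ≤ ((r : ℤ) - 1) * m :=
    mul_nonneg (sub_nonneg.2 (by exact_mod_cast hr)) (Int.natCast_nonneg m)
  linarith
end

section
/- Let r ≥ 1, d ≥ 1 and m ≥ 0 be integers, set N = (r−1)(d+2−m) and k = ⌈((r−1)/r)·d⌉. Let σ_1, …, σ_r be pairwise disjoint faces of Δ_N, and for each i let x_i be a point in the relative interior of σ_i (i.e., supp(x_i) equals the vertex set of σ_i). If the Euclidean distances in ℝ^{N+1} from the points x_i to the geometric k-skeleton of Δ_N are all equal, dist(x_1, sk_k(Δ_N)) = ⋯ = dist(x_r, sk_k(Δ_N)), then these common distances are 0 and all the faces σ_1, …, σ_r lie in the k-skeleton of Δ_N. -/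
/-!
If every face `σ i` had at least `k + 2` vertices, disjointness would give
`r * (k + 2) ≤ N + 1`. But `r * k ≥ (r - 1) * d` by the choice of `k`, so
`r * (k + 2) ≥ (r - 1) * (d + 2) + 2 > N + 1` (`exists_card_le`). Hence some `σ i` has at most
`k + 1` vertices, its point `x i` lies in the skeleton, and the common distance is `0`. The skeleton
is closed, so every `x j` lies in it, which by `mem_skel_iff` bounds the size of its support.
-/

open scoped BigOperators Classical

noncomputable section

/-- The support of a point of the simplex, as a finite set of vertices. -/
def suppF {n : ℕ} (x : EuclideanSpace ℝ (Fin n)) : Finset (Fin n) :=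
  Finset.univ.filter fun i => x i ≠ 0

/-- The geometric `k`-skeleton of the standard `N`-simplex: the union of all faces
with at most `k+1` vertices. -/
def skel (N k : ℕ) : Set (EuclideanSpace ℝ (Fin (N + 1))) :=
  ⋃ S ∈ {S : Finset (Fin (N + 1)) | S.Nonempty ∧ S.card ≤ k + 1}, simpFace N S

theorem mem_skel_iff {N k : ℕ} {x : EuclideanSpace ℝ (Fin (N + 1))} (hx : x ∈ stdSimp N) :
    x ∈ skel N k ↔ (suppF x).card ≤ k + 1 := by
  simp only [skel, Set.mem_iUnion, Set.mem_setOf_eq, exists_prop]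
  constructor
  · rintro ⟨S, ⟨-, hS⟩, -, hxS⟩
    refine (Finset.card_le_card fun i hi => hxS i ?_).trans hS
    simpa [suppF] using hi
  · intro h
    refine ⟨suppF x, ⟨?_, h⟩, hx, fun i hi => by simpa [suppF] using hi⟩
    -- The coordinates sum to `1`, so they cannot all vanish.
    by_contra hempty
    have hzero : ∀ i, x i = 0 := by
      simpa [suppF, Finset.filter_eq_empty_iff] using hempty
    have hsum := hx.2
    simp [hzero] at hsum

theorem isClosed_simpFace (N : ℕ) (S : Finset (Fin (N + 1))) : IsClosed (simpFace N S) := by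
  have heq : simpFace N S =
      ((⋂ i, {x | 0 ≤ x i}) ∩ {x | ∑ i, x i = 1}) ∩ ⋂ i, ⋂ (_ : i ∉ S), {x | x i = 0} := by
    ext x
    simp only [simpFace, stdSimp, Set.mem_setOf_eq, Set.mem_inter_iff, Set.mem_iInter]
    exact and_congr_right fun _ => forall_congr' fun i => not_imp_comm
  rw [heq]
  refine ((isClosed_iInter fun i => ?_).inter ?_).inter
    (isClosed_iInter fun i => isClosed_iInter fun _ => ?_)
  · exact isClosed_le (by fun_prop) (by fun_prop)
  · exact isClosed_eq (by fun_prop) (by fun_prop)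
  · exact isClosed_eq (by fun_prop) (by fun_prop)

theorem isClosed_skel (N k : ℕ) : IsClosed (skel N k) :=
  (Set.toFinite _).isClosed_biUnion fun S _ => isClosed_simpFace N S

/-- The pigeonhole step: `r` disjoint vertex sets cannot all have `k + 2` or more elements. -/
theorem exists_card_le (r d m N k : ℕ) (hr : 1 ≤ r)
    (hN : (N : ℤ) = ((r : ℤ) - 1) * ((d : ℤ) + 2 - (m : ℤ)))
    (hk : k = ⌈(((r : ℚ) - 1) / (r : ℚ)) * d⌉₊)
    (σ : Fin r → Finset (Fin (N + 1)))
    (hdisj : ∀ i i', i ≠ i' → Disjoint (σ i) (σ i')) :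
    ∃ i, (σ i).card ≤ k + 1 := by
  by_contra! h
  have hcard : r * (k + 2) ≤ N + 1 := by
    calc r * (k + 2) = ∑ _i : Fin r, (k + 2) := by simp
      _ ≤ ∑ i, (σ i).card := Finset.sum_le_sum fun i _ => h i
      _ = (Finset.univ.biUnion σ).card :=
        (Finset.card_biUnion fun i _ j _ hij => hdisj i j hij).symm
      _ ≤ N + 1 := by simpa using Finset.card_le_univ (Finset.univ.biUnion σ)
  have hkr : ((r : ℤ) - 1) * d ≤ r * k := by
    have hceil : (((r : ℚ) - 1) / (r : ℚ)) * d ≤ k := hk ▸ Nat.le_ceil _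
    have hpos : (0 : ℚ) < r := by exact_mod_cast hr
    rw [div_mul_eq_mul_div, div_le_iff₀ hpos, mul_comm (k : ℚ)] at hceil
    exact_mod_cast hceil
  have hm : 0 ≤ ((r : ℤ) - 1) * m := mul_nonneg (by omega) (by omega)
  zify at hcard
  nlinarith

/-- If points in the relative interiors of `r` pairwise disjoint faces of `Δ_N`,
`N = (r−1)(d+2−m)`, are all at the same distance from the `k`-skeleton,
`k = ⌈((r−1)/r)·d⌉, then these distances vanish and all the faces lie in the skeleton. -/
theorem equal_distances_to_skeleton_vanish
    (r d m N k : ℕ) (hr : 1 ≤ r) (hd : 1 ≤ d)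
    (hN : (N : ℤ) = ((r : ℤ) - 1) * ((d : ℤ) + 2 - (m : ℤ)))
    (hk : k = ⌈(((r : ℚ) - 1) / (r : ℚ)) * d⌉₊)
    (σ : Fin r → Finset (Fin (N + 1)))
    (hne : ∀ i, (σ i).Nonempty)
    (hdisj : ∀ i i', i ≠ i' → Disjoint (σ i) (σ i'))
    (x : Fin r → EuclideanSpace ℝ (Fin (N + 1)))
    (hx : ∀ i, x i ∈ stdSimp N)
    (hsupp : ∀ i, suppF (x i) = σ i)
    (hdist : ∀ i i', Metric.infDist (x i) (skel N k) = Metric.infDist (x i') (skel N k)) :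
    (∀ i, Metric.infDist (x i) (skel N k) = 0) ∧ (∀ i, (σ i).card ≤ k + 1) := by
  have hmem : ∀ i, x i ∈ skel N k ↔ (σ i).card ≤ k + 1 := fun i => by
    rw [mem_skel_iff (hx i), hsupp]
  obtain ⟨i₀, hi₀⟩ := exists_card_le r d m N k hr hN hk σ hdisj
  have hi₀_mem := (hmem i₀).2 hi₀
  have hzero : ∀ i, Metric.infDist (x i) (skel N k) = 0 := fun i =>
    (hdist i i₀).trans (Metric.infDist_zero_of_mem hi₀_mem)
  exact ⟨hzero, fun i => (hmem i).1 <|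
    ((isClosed_skel N k).mem_iff_infDist_zero ⟨_, hi₀_mem⟩).2 (hzero i)⟩
end
end

section
/- Let r ≥ 1 and N ≥ 0 be integers, and let the vertex set of Δ_N be partitioned into color classes C_0, …, C_d, each of cardinality at most 2r−1. For 0 ≤ i ≤ d let Σ_i denote the subcomplex of Δ_N consisting of all faces with at most one vertex in C_i, regarded as a subset of ℝ^{N+1} (the union of its faces). Let σ_1, …, σ_r be pairwise disjoint faces of Δ_N and for each j let x_j be a point in the relative interior of σ_j. If for every 0 ≤ i ≤ d the Euclidean distances dist(x_1, Σ_i) = ⋯ = dist(x_r, Σ_i) are all equal, then these distances are all 0 and every face σ_j is a rainbow face, i.e., σ_j ∈ Σ_0 ∩ ⋯ ∩ Σ_d. -/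
/-!
Each class `C i` has fewer than `2 r` vertices, so among the `r` pairwise disjoint faces some
`σ j` meets it in at most one vertex (`exists_card_inter_le_one`). The corresponding point lies
in `Σ_i`, hence has distance `0` from it, and by equality of the distances so do all the others.
As `Σ_i` is closed (`isClosed_sigmaSet`), every `x j` lies in `Σ_i`, that is, its supporting face
`σ j` has at most one vertex in `C i`.
-/

open scoped BigOperators Classical

noncomputable section

/-- The geometric realization of the subcomplex of all faces of `Δ_N` having
at most one vertex in the color class `C`. -/
def sigmaSet (N : ℕ) (C : Finset (Fin (N + 1))) : Set (EuclideanSpace ℝ (Fin (N + 1))) :=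
  {x ∈ stdSimp N | (suppF x ∩ C).card ≤ 1}

theorem isClosed_stdSimp (N : ℕ) : IsClosed (stdSimp N) := by
  have h : stdSimp N =
      (⋂ i, {x : EuclideanSpace ℝ (Fin (N + 1)) | 0 ≤ x i}) ∩ {x | ∑ i, x i = 1} := by
    ext x
    simp [stdSimp]
  rw [h]
  exact (isClosed_iInter fun i => isClosed_le (by fun_prop) (by fun_prop)).inter
    (isClosed_eq (by fun_prop) (by fun_prop))

/-- Having at most one vertex of `C` in the support is the closed condition that
`x a * x b = 0` for all distinct `a, b ∈ C`. -/
theorem isClosed_sigmaSet (N : ℕ) (C : Finset (Fin (N + 1))) : IsClosed (sigmaSet N C) := by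
  have h : sigmaSet N C = stdSimp N ∩
      ⋂ a ∈ C, ⋂ b ∈ C, {x : EuclideanSpace ℝ (Fin (N + 1)) | a ≠ b → x a * x b = 0} := by
    ext x
    simp only [sigmaSet, suppF, Finset.card_le_one, Set.mem_ofPred_eq, Set.mem_inter_iff,
      Set.mem_iInter, Finset.mem_inter, Finset.mem_filter, Finset.mem_univ, true_and, mul_eq_zero]
    refine and_congr_right fun _ => ⟨fun h a ha b hb hab => ?_, fun h a ha b hb => ?_⟩
    · by_contra! hc
      exact hab (h a ⟨hc.1, ha⟩ b ⟨hc.2, hb⟩)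
    · by_contra hab
      exact (h a ha.2 b hb.2 hab).elim ha.1 hb.1
  rw [h]
  refine (isClosed_stdSimp N).inter
    (isClosed_biInter fun a _ => isClosed_biInter fun b _ => ?_)
  by_cases hab : a = b
  · simp [hab]
  · simpa [hab, -mul_eq_zero] using
      isClosed_eq (f := fun x : EuclideanSpace ℝ (Fin (N + 1)) => x a * x b) (g := fun _ => 0)
        (by fun_prop) (by fun_prop)

/-- Pigeonhole: if all `r` disjoint sets had two elements in `C`, then `C` would have at least
`2 r` elements. -/
theorem exists_card_inter_le_one {α : Type*} [DecidableEq α] {r : ℕ} (hr : 1 ≤ r)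
    (C : Finset α) (hC : C.card ≤ 2 * r - 1) (σ : Fin r → Finset α)
    (hdisj : ∀ j j', j ≠ j' → Disjoint (σ j) (σ j')) : ∃ j, (σ j ∩ C).card ≤ 1 := by
  by_contra! h
  have hunion : (Finset.univ.biUnion fun j => σ j ∩ C).card = ∑ j, (σ j ∩ C).card :=
    Finset.card_biUnion fun j _ j' _ hjj' =>
      (hdisj j j' hjj').mono Finset.inter_subset_left Finset.inter_subset_left
  have hle : (Finset.univ.biUnion fun j => σ j ∩ C).card ≤ C.card :=
    Finset.card_le_card (Finset.biUnion_subset.2 fun _ _ => Finset.inter_subset_right)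
  have hsum : ∑ _j : Fin r, 2 ≤ ∑ j, (σ j ∩ C).card := Finset.sum_le_sum fun j _ => h j
  simp at hsum
  omega

/-- If points in the relative interiors of `r` pairwise disjoint faces of `Δ_N` are, for
each color class `C_i` of cardinality at most `2r−1`, all at the same distance from the
subcomplex `Σ_i` of faces with at most one vertex in `C_i`, then all these distances vanish
and all the faces are rainbow faces. -/
theorem equal_distances_to_color_subcomplexes_vanish
    (r N d : ℕ) (hr : 1 ≤ r)
    (C : Fin (d + 1) → Finset (Fin (N + 1)))
    (hCdisj : ∀ i i' : Fin (d + 1), i ≠ i' → Disjoint (C i) (C i'))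
    (hCcover : ∀ v : Fin (N + 1), ∃ i, v ∈ C i)
    (hCcard : ∀ i, (C i).card ≤ 2 * r - 1)
    (σ : Fin r → Finset (Fin (N + 1)))
    (hne : ∀ j, (σ j).Nonempty)
    (hdisj : ∀ j j', j ≠ j' → Disjoint (σ j) (σ j'))
    (x : Fin r → EuclideanSpace ℝ (Fin (N + 1)))
    (hx : ∀ j, x j ∈ stdSimp N)
    (hsupp : ∀ j, suppF (x j) = σ j)
    (hdist : ∀ i : Fin (d + 1), ∀ j j' : Fin r,
      Metric.infDist (x j) (sigmaSet N (C i)) = Metric.infDist (x j') (sigmaSet N (C i))) :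
    (∀ i : Fin (d + 1), ∀ j : Fin r, Metric.infDist (x j) (sigmaSet N (C i)) = 0) ∧
    (∀ j : Fin r, ∀ i : Fin (d + 1), (σ j ∩ C i).card ≤ 1) := by
  have hex : ∀ i, ∃ k, x k ∈ sigmaSet N (C i) := by
    intro i
    obtain ⟨k, hk⟩ := exists_card_inter_le_one hr (C i) (hCcard i) σ hdisj
    exact ⟨k, hx k, by rwa [hsupp k]⟩
  have hzero : ∀ i j, Metric.infDist (x j) (sigmaSet N (C i)) = 0 := by
    intro i j
    obtain ⟨k, hk⟩ := hex i
    rw [hdist i j k]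
    exact Metric.infDist_zero_of_mem hk
  refine ⟨hzero, fun j i => ?_⟩
  -- `infDist` to the empty set is also `0`, so nonemptiness of `Σ_i` is needed here.
  have hnonempty : (sigmaSet N (C i)).Nonempty := (hex i).imp' x fun _ hk => hk
  have hmem : x j ∈ sigmaSet N (C i) :=
    ((isClosed_sigmaSet N (C i)).mem_iff_infDist_zero hnonempty).2 (hzero i j)
  rw [← hsupp j]
  exact hmem.2
end
end
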